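/- Let n ≥ 3, let L be the permutation group induced by Sym(n) on ordered pairs of distinct elements of {1,…,n}, and let (Γ,G) be a locally L pair. Then for every edge {x,y} of Γ, the group G_{xy}^{[2]} = G_x^{[2]} ∩ G_y^{[2]} is trivial. -/

import Mathlib

open MulAction Pointwise

/-- The set of ordered pairs of distinct elements of `{1,…,n}`. -/
abbrev OPairs (n : ℕ) : Type := {p : Fin n × Fin n // p.1 ≠ p.2}

/-- `Sym(n)` acts on the ordered pairs of distinct elements. -/
instance opairsAction (n : ℕ) : MulAction (Equiv.Perm (Fin n)) (OPairs n) where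
  smul σ p := ⟨(σ p.1.1, σ p.1.2), fun h => p.2 (σ.injective h)⟩
  one_smul p := rfl
  mul_smul σ τ p := rfl

/-- Every element of `G` is an automorphism of `Γ`. -/
def PreservesAdj {V : Type*} (Γ : SimpleGraph V) (G : Subgroup (Equiv.Perm V)) : Prop :=
  ∀ g ∈ G, ∀ u v : V, Γ.Adj u v ↔ Γ.Adj (g u) (g v)

/-- The pointwise stabiliser in `G` of the ball of radius `i` around `x`. -/
def ballStab {V : Type*} (Γ : SimpleGraph V) (G : Subgroup (Equiv.Perm V)) (x : V) (i : ℕ) :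
    Subgroup G :=
  ⨅ (v : V) (_ : Γ.dist x v ≤ i), MulAction.stabilizer G v

/-- `(Γ, G)` is a locally `L` pair, for `L` the permutation group induced by `Sym(n)` on
ordered pairs of distinct elements of `{1,…,n}`. -/
def IsLocallyOPairs (n : ℕ) {V : Type*} (Γ : SimpleGraph V) (G : Subgroup (Equiv.Perm V)) :
    Prop :=
  PreservesAdj Γ G ∧ MulAction.IsPretransitive G V ∧
  ∀ x : V, ∃ (e : Γ.neighborSet x ≃ OPairs n)
      (φ : MulAction.stabilizer G x →* Equiv.Perm (Fin n)),
    Function.Surjective φ ∧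
    ∀ (g : MulAction.stabilizer G x) (v : Γ.neighborSet x),
      ((e.symm (φ g • e v) : Γ.neighborSet x) : V) = g • (v : V)

section GroupLemmas

variable {G : Type*} [Group G]

/-- `H` normalises `K`. -/
def Nrm (H K : Subgroup G) : Prop := ∀ h ∈ H, ∀ k ∈ K, h * k * h⁻¹ ∈ K

/-- `H` centralises `K`. -/
def Cen (H K : Subgroup G) : Prop := ∀ h ∈ H, ∀ k ∈ K, h * k = k * h

/-- Conjugate of a subgroup. -/
def cj (g : G) (K : Subgroup G) : Subgroup G := K.map (MulAut.conj g).toMonoidHom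

theorem mem_cj {g x : G} {K : Subgroup G} : x ∈ cj g K ↔ g⁻¹ * x * g ∈ K := by
  unfold cj
  rw [Subgroup.mem_map]
  constructor
  · rintro ⟨k, hk, rfl⟩
    simpa [mul_assoc] using hk
  · intro h
    exact ⟨_, h, by simp [mul_assoc]⟩

theorem conj_mem_cj {g x : G} {K : Subgroup G} (h : x ∈ K) : g * x * g⁻¹ ∈ cj g K := by
  rw [mem_cj]; simpa [mul_assoc] using h

theorem cj_one (K : Subgroup G) : cj 1 K = K := by ext; simp [mem_cj]

theorem cj_mul (g h : G) (K : Subgroup G) : cj (g * h) K = cj g (cj h K) := by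
  ext; simp [mem_cj, mul_assoc]

theorem cj_inv_cj (g : G) (K : Subgroup G) : cj g⁻¹ (cj g K) = K := by
  rw [← cj_mul]; simp [cj_one]

theorem cj_cj_inv (g : G) (K : Subgroup G) : cj g (cj g⁻¹ K) = K := by
  rw [← cj_mul]; simp [cj_one]

theorem cj_mono (g : G) {K L : Subgroup G} (h : K ≤ L) : cj g K ≤ cj g L :=
  Subgroup.map_mono h

theorem cj_le_cj {g : G} {K L : Subgroup G} : cj g K ≤ cj g L ↔ K ≤ L := by
  constructor
  · intro h; simpa [cj_inv_cj] using cj_mono g⁻¹ h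
  · exact cj_mono g

theorem cj_inj {g : G} {K L : Subgroup G} : cj g K = cj g L ↔ K = L := by
  constructor
  · intro h; simpa [cj_inv_cj] using congrArg (cj g⁻¹) h
  · rintro rfl; rfl

theorem cj_le_iff {g : G} {K L : Subgroup G} : cj g K ≤ L ↔ K ≤ cj g⁻¹ L := by
  rw [← cj_le_cj (g := g⁻¹), cj_inv_cj]

theorem cj_bot (g : G) : cj g (⊥ : Subgroup G) = ⊥ := Subgroup.map_bot _

theorem cj_eq_bot {g : G} {K : Subgroup G} : cj g K = ⊥ ↔ K = ⊥ := by
  rw [← cj_inj (g := g) (K := K), cj_bot]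

theorem cj_inf (g : G) (K L : Subgroup G) : cj g (K ⊓ L) = cj g K ⊓ cj g L := by
  ext; simp [mem_cj]

theorem cj_sup (g : G) (K L : Subgroup G) : cj g (K ⊔ L) = cj g K ⊔ cj g L :=
  Subgroup.map_sup _ _ _

theorem cj_iSup {ι : Sort*} (g : G) (K : ι → Subgroup G) : cj g (⨆ i, K i) = ⨆ i, cj g (K i) :=
  Subgroup.map_iSup _ _

theorem cj_comm (g : G) (K L : Subgroup G) : cj g ⁅K, L⁆ = ⁅cj g K, cj g L⁆ :=
  Subgroup.map_commutator _ _ _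

theorem cj_card (g : G) (K : Subgroup G) : Nat.card (cj g K) = Nat.card K :=
  Subgroup.card_map_of_injective (MulAut.conj g).injective

theorem cj_pgroup {p : ℕ} {g : G} {K : Subgroup G} (h : IsPGroup p K) : IsPGroup p (cj g K) :=
  h.map _

theorem Nrm.cj_eq {H K : Subgroup G} (h : Nrm H K) {g : G} (hg : g ∈ H) : cj g K = K := by
  ext x
  rw [mem_cj]
  constructor
  · intro hx
    have := h g hg _ hx
    simpa [mul_assoc] using this
  · intro hx
    have := h g⁻¹ (H.inv_mem hg) _ hx
    simpa [mul_assoc] using this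

theorem Nrm_iff_cj {H K : Subgroup G} : Nrm H K ↔ ∀ g ∈ H, cj g K = K := by
  constructor
  · intro h g hg; exact h.cj_eq hg
  · intro h g hg k hk
    have := conj_mem_cj (g := g) hk
    rwa [h g hg] at this

theorem Nrm_iff_le {H K : Subgroup G} : Nrm H K ↔ H ≤ Subgroup.normalizer (K : Set G) :=
  Subgroup.le_normalizer_iff.symm

theorem mem_normalizer_cj {g : G} {K : Subgroup G} :
    g ∈ Subgroup.normalizer (K : Set G) ↔ cj g K = K :=
  Subgroup.mem_normalizer_iff_map_conj_eq

theorem Nrm.mono {H H' K : Subgroup G} (h : Nrm H K) (hh : H' ≤ H) : Nrm H' K :=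
  fun g hg => h g (hh hg)

theorem Nrm.refl (H : Subgroup G) : Nrm H H :=
  fun _ hg _ hk => H.mul_mem (H.mul_mem hg hk) (H.inv_mem hg)

theorem Nrm.of_le {H K : Subgroup G} (h : H ≤ K) : Nrm H K := (Nrm.refl K).mono h

theorem Nrm.inf {H K L : Subgroup G} (h : Nrm H K) (h' : Nrm H L) : Nrm H (K ⊓ L) :=
  fun g hg k hk => ⟨h g hg k hk.1, h' g hg k hk.2⟩

theorem Nrm.cj {H K : Subgroup G} (h : Nrm H K) (g : G) : Nrm (cj g H) (cj g K) := by
  intro a ha k hk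
  rw [mem_cj] at *
  have := h _ ha _ hk
  simpa [mul_assoc] using this

theorem Nrm.iSup {ι : Sort*} {H : Subgroup G} {K : ι → Subgroup G} (h : ∀ i, Nrm H (K i)) :
    Nrm H (⨆ i, K i) := by
  rw [Nrm_iff_cj]
  intro g hg
  rw [cj_iSup]
  exact iSup_congr fun i => (h i).cj_eq hg

theorem Nrm.sup {H K L : Subgroup G} (h : Nrm H K) (h' : Nrm H L) : Nrm H (K ⊔ L) := by
  rw [Nrm_iff_cj]
  intro g hg
  rw [cj_sup, h.cj_eq hg, h'.cj_eq hg]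

theorem Nrm.sup_left {H H' K : Subgroup G} (h : Nrm H K) (h' : Nrm H' K) : Nrm (H ⊔ H') K := by
  rw [Nrm_iff_le] at *
  exact sup_le h h'

theorem Nrm.comm {H K L : Subgroup G} (h : Nrm H K) (h' : Nrm H L) : Nrm H ⁅K, L⁆ := by
  rw [Nrm_iff_cj]
  intro g hg
  rw [cj_comm, h.cj_eq hg, h'.cj_eq hg]

theorem Nrm.comm_le {H K : Subgroup G} (h : Nrm H K) : ⁅H, K⁆ ≤ K := by
  rw [Subgroup.commutator_le]
  intro a ha b hb
  rw [commutatorElement_def]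
  exact K.mul_mem (h a ha b hb) (K.inv_mem hb)

theorem Nrm.comm_le' {H K : Subgroup G} (h : Nrm H K) : ⁅K, H⁆ ≤ K := by
  rw [Subgroup.commutator_comm]; exact h.comm_le

theorem Nrm_of_comm_le {H K : Subgroup G} (h : ⁅H, K⁆ ≤ K) : Nrm H K := by
  rw [Subgroup.commutator_le] at h
  intro a ha b hb
  have := K.mul_mem (h a ha b hb) hb
  simpa [commutatorElement_def, mul_assoc] using this

theorem Cen_iff {H K : Subgroup G} : Cen H K ↔ ⁅H, K⁆ = ⊥ := by
  rw [Subgroup.commutator_eq_bot_iff_le_centralizer]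
  constructor
  · intro h a ha
    rw [Subgroup.mem_centralizer_iff]
    intro k hk
    exact (h a ha k hk).symm
  · intro h a ha k hk
    exact ((Subgroup.mem_centralizer_iff.1 (h ha)) k hk).symm

theorem Cen.symm {H K : Subgroup G} (h : Cen H K) : Cen K H :=
  fun a ha b hb => (h b hb a ha).symm

theorem Cen.mono {H K H' K' : Subgroup G} (h : Cen H K) (h1 : H' ≤ H) (h2 : K' ≤ K) : Cen H' K' :=
  fun a ha b hb => h a (h1 ha) b (h2 hb)

theorem Cen.nrm {H K : Subgroup G} (h : Cen H K) : Nrm H K := by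
  intro a ha b hb
  rw [h a ha b hb]; simpa using hb

theorem Cen.iSup {ι : Sort*} {H : Subgroup G} {K : ι → Subgroup G} (h : ∀ i, Cen H (K i)) :
    Cen H (⨆ i, K i) := by
  intro a ha b hb
  have : (⨆ i, K i) ≤ Subgroup.centralizer ({a} : Set G) := by
    apply iSup_le
    intro i k hk
    rw [Subgroup.mem_centralizer_singleton_iff]
    exact (h i a ha k hk).symm
  exact (Subgroup.mem_centralizer_singleton_iff.1 (this hb)).symm

theorem Cen.sup {H K L : Subgroup G} (h : Cen H K) (h' : Cen H L) : Cen H (K ⊔ L) := by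
  rw [sup_eq_iSup]
  apply Cen.iSup
  rintro (_ | _) <;> simpa

theorem Cen.cj {H K : Subgroup G} (h : Cen H K) (g : G) : Cen (cj g H) (cj g K) := by
  rw [Cen_iff] at *
  rw [← cj_comm, h, cj_bot]

/-- Relative subnormality. -/
inductive Subn : Subgroup G → Subgroup G → Prop
  | refl (A : Subgroup G) : Subn A A
  | step {A B C : Subgroup G} : Subn A B → B ≤ C → Nrm C B → Subn A C

theorem Subn.le {A B : Subgroup G} (h : Subn A B) : A ≤ B := by
  induction h with
  | refl => exact le_rfl
  | step _ h _ ih => exact ih.trans h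

theorem Subn.trans {A B C : Subgroup G} (h : Subn A B) (h' : Subn B C) : Subn A C := by
  induction h' with
  | refl => exact h
  | step _ h1 h2 ih => exact .step ih h1 h2

theorem Subn.of_nrm {A B : Subgroup G} (h : A ≤ B) (h' : Nrm B A) : Subn A B :=
  .step (.refl A) h h'

theorem Subn.inf {A L : Subgroup G} (h : Subn A L) (K : Subgroup G) : Subn (A ⊓ K) (L ⊓ K) := by
  induction h with
  | refl => exact .refl _
  | step _ h1 h2 ih =>
    refine .step ih (inf_le_inf_right _ h1) ?_
    exact (h2.mono inf_le_left).inf (Nrm.of_le inf_le_right)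

theorem Subn.restrict {A K L : Subgroup G} (h : Subn A L) (h1 : A ≤ K) (h2 : K ≤ L) : Subn A K := by
  have := h.inf K
  rwa [inf_eq_left.2 h1, inf_eq_right.2 h2] at this

theorem Subn.cj {A L : Subgroup G} (h : Subn A L) (g : G) : Subn (cj g A) (cj g L) := by
  induction h with
  | refl => exact .refl _
  | step _ h1 h2 ih => exact .step ih (cj_mono _ h1) (h2.cj g)

theorem Subn.exists_lt {A L : Subgroup G} (h : Subn A L) (hne : A ≠ L) :
    ∃ B, Subn A B ∧ B < L ∧ Nrm L B := by
  induction h with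
  | refl => exact absurd rfl hne
  | @step B C h0 h1 h2 ih =>
    by_cases hBC : B = C
    · subst hBC; exact ih hne
    · exact ⟨B, h0, lt_of_le_of_ne h1 hBC, h2⟩

variable [Finite G]

theorem wielandt {M : Subgroup G} (simple : ∀ K, Nrm M K → K ≤ M → K = ⊥ ∨ K = M)
    (perf : ⁅M, M⁆ = M) : ∀ (k : ℕ) (L X : Subgroup G), Nat.card L ≤ k → Subn M L → Subn X L →
    M ≤ X ∨ Cen M X := by
  intro k
  induction k with
  | zero =>
    intro L X h
    have : 0 < Nat.card L := Nat.card_pos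
    omega
  | succ k ih =>
    intro L X hL hM hX
    have hlt : ∀ B : Subgroup G, B < L → Nat.card B ≤ k := by
      intro B hB
      have h1 : Nat.card B < Nat.card L := by
        apply Set.ncard_lt_ncard (s := (B : Set G)) (t := (L : Set G)) (by exact_mod_cast hB)
      omega
    by_cases hXL : X = L
    · left; rw [hXL]; exact hM.le
    obtain ⟨G1, hXG, hG1, hN1⟩ := hX.exists_lt hXL
    by_cases hMG : M ≤ G1
    · exact ih G1 X (hlt _ hG1) (hM.restrict hMG hG1.le) hXG
    right
    by_cases hML : M = L
    · subst hML
      rcases simple G1 hN1 hG1.le with h | h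
      · have : X ≤ ⊥ := h ▸ hXG.le
        intro a _ b hb
        have := this hb
        rw [Subgroup.mem_bot] at this
        simp [this]
      · exact absurd h.ge hMG
    obtain ⟨L1, hML1, hL1, hN2⟩ := hM.exists_lt hML
    have h1 : Subn (G1 ⊓ L1) L1 :=
      Subn.of_nrm inf_le_right ((hN1.mono hL1.le).inf (Nrm.refl _))
    rcases ih L1 _ (hlt _ hL1) hML1 h1 with h | h
    · exact absurd (h.trans inf_le_left) hMG
    have h2 : ⁅M, G1⁆ ≤ G1 ⊓ L1 := by
      apply le_inf
      · exact (hN1.mono hM.le).comm_le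
      · exact (Subgroup.commutator_mono hML1.le le_rfl).trans (hN2.mono hG1.le).comm_le'
    have h3 : ⁅⁅M, G1⁆, M⁆ = ⊥ := Cen_iff.1 (h.symm.mono h2 le_rfl)
    have h4 : ⁅⁅M, M⁆, G1⁆ = ⊥ := by
      apply Subgroup.commutator_commutator_eq_bot_of_rotate
      · exact h3
      · rw [Subgroup.commutator_comm G1 M]; exact h3
    rw [perf] at h4
    exact (Cen_iff.2 h4).mono le_rfl hXG.le

theorem exists_min_subn (P : Subgroup G) (hP : P ≠ ⊥) : ∃ M, Subn M P ∧ M ≠ ⊥ ∧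
    ∀ K, Nrm M K → K ≤ M → K = ⊥ ∨ K = M := by
  obtain ⟨M, hM⟩ := Set.Finite.exists_minimal (s := {M : Subgroup G | Subn M P ∧ M ≠ ⊥})
    (Set.toFinite _) ⟨P, .refl P, hP⟩
  refine ⟨M, hM.prop.1, hM.prop.2, ?_⟩
  intro K hK hKM
  by_contra! hcon
  exact hcon.2 (le_antisymm hKM (hM.le_of_le ⟨(Subn.of_nrm hKM hK).trans hM.prop.1, hcon.1⟩ hKM))

theorem simple_dichotomy (M : Subgroup G) (hM : M ≠ ⊥)
    (simple : ∀ K, Nrm M K → K ≤ M → K = ⊥ ∨ K = M) :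
    ⁅M, M⁆ = M ∨ ∃ p : ℕ, p.Prime ∧ IsPGroup p M := by
  rcases simple ⁅M, M⁆ ((Nrm.refl M).comm (Nrm.refl M)) (Nrm.refl M).comm_le with h | h
  · right
    have hc : Cen M M := Cen_iff.2 h
    have hcard : Nat.card M ≠ 1 := by
      rwa [Ne, Subgroup.card_eq_one]
    obtain ⟨p, hp, hd⟩ := Nat.exists_prime_and_dvd hcard
    have := Fact.mk hp
    refine ⟨p, hp, ?_⟩
    let K : Subgroup G :=
      { carrier := {g | g ∈ M ∧ g ^ p = 1}
        one_mem' := ⟨M.one_mem, one_pow _⟩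
        mul_mem' := by
          rintro a b ⟨ha, ha'⟩ ⟨hb, hb'⟩
          refine ⟨M.mul_mem ha hb, ?_⟩
          have : Commute a b := hc a ha b hb
          rw [this.mul_pow, ha', hb', one_mul]
        inv_mem' := by
          rintro a ⟨ha, ha'⟩
          exact ⟨M.inv_mem ha, by rw [inv_pow, ha', inv_one]⟩ }
    have hKM : K ≤ M := fun g hg => hg.1
    rcases simple K (hc.mono le_rfl hKM).nrm hKM with h1 | h1
    · exfalso
      obtain ⟨g, hg⟩ := exists_prime_orderOf_dvd_card' p hd
      have : (g : G) ∈ K := ⟨g.2, by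
        have := pow_orderOf_eq_one g
        rw [hg] at this
        exact_mod_cast congrArg Subtype.val this⟩
      rw [h1, Subgroup.mem_bot] at this
      have h2 : g = 1 := Subtype.ext this
      rw [h2, orderOf_one] at hg
      exact hp.one_lt.ne hg
    · intro g
      refine ⟨1, ?_⟩
      have : (g : G) ∈ K := by rw [h1]; exact g.2
      rw [pow_one]
      exact Subtype.ext this.2
  · exact .inl h

/-- The largest normal `p`-subgroup of `L`. -/
def Op (p : ℕ) (L : Subgroup G) : Subgroup G :=
  sSup {K | K ≤ L ∧ Nrm L K ∧ IsPGroup p K}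

theorem Op_mem (p : ℕ) (L : Subgroup G) :
    Op p L ∈ {K : Subgroup G | K ≤ L ∧ Nrm L K ∧ IsPGroup p K} := by
  obtain ⟨M, hM⟩ := Set.Finite.exists_maximal
    (s := {K : Subgroup G | K ≤ L ∧ Nrm L K ∧ IsPGroup p K})
    (Set.toFinite _) ⟨⊥, bot_le, by intro a _ b hb; rw [Subgroup.mem_bot] at *; simp [hb],
      IsPGroup.of_bot⟩
  have : Op p L = M := by
    apply le_antisymm
    · apply sSup_le
      intro K hK
      have h : K ⊔ M ∈ {K : Subgroup G | K ≤ L ∧ Nrm L K ∧ IsPGroup p K} := by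
        refine ⟨sup_le hK.1 hM.prop.1, hK.2.1.sup hM.prop.2.1, ?_⟩
        exact IsPGroup.to_sup_of_normal_right' hK.2.2 hM.prop.2.2
          (hK.1.trans (Nrm_iff_le.1 hM.prop.2.1))
      exact le_sup_left.trans (hM.le_of_ge h le_sup_right)
    · exact le_sSup hM.prop
  rw [this]
  exact hM.prop

theorem Op_le (p : ℕ) (L : Subgroup G) : Op p L ≤ L := (Op_mem p L).1
theorem Op_nrm (p : ℕ) (L : Subgroup G) : Nrm L (Op p L) := (Op_mem p L).2.1
theorem Op_pgroup (p : ℕ) (L : Subgroup G) : IsPGroup p (Op p L) := (Op_mem p L).2.2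
theorem le_Op {p : ℕ} {L K : Subgroup G} (h1 : K ≤ L) (h2 : Nrm L K) (h3 : IsPGroup p K) :
    K ≤ Op p L := le_sSup ⟨h1, h2, h3⟩

theorem Op_cj (p : ℕ) (L : Subgroup G) (g : G) : cj g (Op p L) = Op p (cj g L) := by
  have key : ∀ (g : G) (L : Subgroup G), cj g (Op p L) ≤ Op p (cj g L) := fun g L =>
    le_Op (cj_mono g (Op_le p L)) ((Op_nrm p L).cj g) (cj_pgroup (Op_pgroup p L))
  apply le_antisymm (key g L)
  have := cj_mono g (key g⁻¹ (cj g L))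
  rwa [cj_cj_inv, cj_inv_cj] at this

theorem Nrm.Op {A L : Subgroup G} (h : Nrm A L) (p : ℕ) : Nrm A (Op p L) := by
  rw [Nrm_iff_cj]
  intro g hg
  rw [Op_cj, h.cj_eq hg]

theorem Subn.Op_le {K L : Subgroup G} (h : Subn K L) (p : ℕ) : Op p K ≤ Op p L := by
  induction h with
  | refl => exact le_rfl
  | step _ h1 h2 ih =>
    exact ih.trans (le_Op ((_root_.Op_le p _).trans h1) (h2.Op p) (Op_pgroup p _))

theorem Subn.le_Op {K L : Subgroup G} {p : ℕ} (h : Subn K L) (hK : IsPGroup p K) : K ≤ Op p L :=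
  (_root_.le_Op le_rfl (Nrm.refl K) hK).trans (h.Op_le p)

theorem Op_inf_le {K L : Subgroup G} (p : ℕ) (h : K ≤ L) : Op p L ⊓ K ≤ Op p K :=
  le_Op inf_le_right (((Op_nrm p L).mono h).inf (Nrm.refl K)) ((Op_pgroup p L).to_le inf_le_left)

end GroupLemmas

section GraphSetup

theorem perm2 {α : Type*} {a b a' b' : α} (h1 : a ≠ b) (h2 : a' ≠ b') :
    ∃ σ : Equiv.Perm α, σ a = a' ∧ σ b = b' := by
  have inj : ∀ a b : α, a ≠ b → Function.Injective ![a, b] := by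
    intro a b h i j
    fin_cases i <;> fin_cases j <;> simp [h, h.symm]
  obtain ⟨σ, h⟩ := Equiv.Perm.exists_extending_pair _ _ (inj a b h1) (inj a' b' h2)
  exact ⟨σ, h 0, h 1⟩

theorem perm3 {α : Type*} {a b c a' b' c' : α} (h1 : a ≠ b) (h2 : a ≠ c) (h3 : b ≠ c)
    (h1' : a' ≠ b') (h2' : a' ≠ c') (h3' : b' ≠ c') :
    ∃ σ : Equiv.Perm α, σ a = a' ∧ σ b = b' ∧ σ c = c' := by
  have inj : ∀ a b c : α, a ≠ b → a ≠ c → b ≠ c → Function.Injective ![a, b, c] := by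
    intro a b c h h2 h3 i j
    fin_cases i <;> fin_cases j <;> simp [h, h.symm, h2, h2.symm, h3, h3.symm]
  obtain ⟨σ, h⟩ := Equiv.Perm.exists_extending_pair _ _ (inj a b c h1 h2 h3) (inj a' b' c' h1' h2' h3')
  exact ⟨σ, h 0, h 1, h 2⟩

theorem perm4 {α : Type*} {a b c d a' b' c' d' : α} (h1 : a ≠ b) (h2 : a ≠ c) (h3 : a ≠ d)
    (h4 : b ≠ c) (h5 : b ≠ d) (h6 : c ≠ d)
    (h1' : a' ≠ b') (h2' : a' ≠ c') (h3' : a' ≠ d') (h4' : b' ≠ c') (h5' : b' ≠ d') (h6' : c' ≠ d') :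
    ∃ σ : Equiv.Perm α, σ a = a' ∧ σ b = b' ∧ σ c = c' ∧ σ d = d' := by
  have inj : ∀ a b c d : α, a ≠ b → a ≠ c → a ≠ d → b ≠ c → b ≠ d → c ≠ d →
      Function.Injective ![a, b, c, d] := by
    intro a b c d h1 h2 h3 h4 h5 h6 i j
    fin_cases i <;> fin_cases j <;> simp [h1, h1.symm, h2, h2.symm, h3, h3.symm, h4, h4.symm,
      h5, h5.symm, h6, h6.symm]
  obtain ⟨σ, h⟩ := Equiv.Perm.exists_extending_pair _ _ (inj a b c d h1 h2 h3 h4 h5 h6)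
    (inj a' b' c' d' h1' h2' h3' h4' h5' h6')
  exact ⟨σ, h 0, h 1, h 2,
    h 3⟩

variable {G V : Type*} [Group G] [MulAction G V]

/-- `g` acts on the labelled vertices `ℓ a b` as the permutation `σ`. -/
def Act {n : ℕ} (ℓ : Fin n → Fin n → V) (g : G) (σ : Equiv.Perm (Fin n)) : Prop :=
  ∀ a b, a ≠ b → g • ℓ a b = ℓ (σ a) (σ b)

theorem Act.mul {n : ℕ} {ℓ : Fin n → Fin n → V} {g h : G} {σ τ : Equiv.Perm (Fin n)}
    (hg : Act ℓ g σ) (hh : Act ℓ h τ) : Act ℓ (g * h) (σ * τ) := by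
  intro a b hab
  rw [mul_smul, hh a b hab, hg _ _ (fun h => hab (τ.injective h))]
  rfl

theorem Act.inv {n : ℕ} {ℓ : Fin n → Fin n → V} {g : G} {σ : Equiv.Perm (Fin n)}
    (hg : Act ℓ g σ) : Act ℓ g⁻¹ σ⁻¹ := by
  intro a b hab
  rw [inv_smul_eq_iff, hg _ _ (fun h => hab (σ⁻¹.injective h))]
  simp

theorem Act.one {n : ℕ} {ℓ : Fin n → Fin n → V} : Act ℓ (1 : G) 1 := by
  intro a b _; simp

theorem Act.pow {n : ℕ} {ℓ : Fin n → Fin n → V} {g : G} {σ : Equiv.Perm (Fin n)}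
    (hg : Act ℓ g σ) (k : ℕ) : Act ℓ (g ^ k) (σ ^ k) := by
  induction k with
  | zero => simpa using Act.one
  | succ k ih => rw [pow_succ, pow_succ]; exact ih.mul hg

/-- A labelling of the neighbours of `x` by ordered pairs on which `G_x` acts as `Sym(n)`. -/
structure IsLab (G : Type*) {V : Type*} [Group G] [MulAction G V] (Γ : SimpleGraph V) {n : ℕ}
    (x : V) (ℓ : Fin n → Fin n → V) : Prop where
  adj : ∀ a b, a ≠ b → Γ.Adj x (ℓ a b)
  inj : ∀ a b c d, a ≠ b → c ≠ d → ℓ a b = ℓ c d → a = c ∧ b = d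
  surj : ∀ y, Γ.Adj x y → ∃ a b, a ≠ b ∧ ℓ a b = y
  act : ∀ g : G, g • x = x → ∃ σ, Act ℓ g σ
  real : ∀ σ, ∃ g : G, g • x = x ∧ Act ℓ g σ

theorem IsLab.swap {Γ : SimpleGraph V} {n : ℕ} {x : V} {ℓ : Fin n → Fin n → V}
    (h : IsLab G Γ x ℓ) : IsLab G Γ x (fun a b => ℓ b a) where
  adj a b hab := h.adj b a hab.symm
  inj a b c d hab hcd he := (h.inj b a d c hab.symm hcd.symm he).symm
  surj y hy := by
    obtain ⟨a, b, hab, he⟩ := h.surj y hy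
    exact ⟨b, a, hab.symm, he⟩
  act g hg := by
    obtain ⟨σ, hσ⟩ := h.act g hg
    exact ⟨σ, fun a b hab => hσ b a hab.symm⟩
  real σ := by
    obtain ⟨g, hg, hσ⟩ := h.real σ
    exact ⟨g, hg, fun a b hab => hσ b a hab.symm⟩

/-- A locally `L` pair, abstractly. -/
structure LocPair (G : Type*) {V : Type*} [Group G] [MulAction G V] (Γ : SimpleGraph V) (n : ℕ) :
    Prop where
  conn : Γ.Connected
  faithful : ∀ g : G, (∀ v : V, g • v = v) → g = 1
  adj : ∀ (g : G) (u v : V), Γ.Adj u v → Γ.Adj (g • u) (g • v)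
  trans : ∀ u v : V, ∃ g : G, g • u = v
  lab : ∀ x : V, ∃ ℓ : Fin n → Fin n → V, IsLab G Γ x ℓ

/-- Vertex stabiliser. -/
abbrev St (G : Type*) {V : Type*} [Group G] [MulAction G V] (x : V) : Subgroup G := stabilizer G x

/-- Arc stabiliser. -/
abbrev HH (G : Type*) {V : Type*} [Group G] [MulAction G V] (x y : V) : Subgroup G :=
  stabilizer G x ⊓ stabilizer G y

/-- Pointwise stabiliser of a ball of radius one. -/
def NN (G : Type*) {V : Type*} [Group G] [MulAction G V] (Γ : SimpleGraph V) (x : V) :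
    Subgroup G where
  carrier := {g | g • x = x ∧ ∀ z, Γ.Adj x z → g • z = z}
  one_mem' := by simp
  mul_mem' := by
    rintro a b ⟨h1, h2⟩ ⟨h3, h4⟩
    refine ⟨by rw [mul_smul, h3, h1], fun z hz => by rw [mul_smul, h4 z hz, h2 z hz]⟩
  inv_mem' := by
    rintro a ⟨h1, h2⟩
    exact ⟨by rw [inv_smul_eq_iff, h1], fun z hz => by rw [inv_smul_eq_iff, h2 z hz]⟩

variable {Γ : SimpleGraph V} {n : ℕ}

theorem mem_NN {x : V} {g : G} : g ∈ NN G Γ x ↔ g • x = x ∧ ∀ z, Γ.Adj x z → g • z = z := Iff.rfl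

theorem mem_St {x : V} {g : G} : g ∈ St G x ↔ g • x = x := Iff.rfl

theorem mem_HH {x y : V} {g : G} : g ∈ HH G x y ↔ g • x = x ∧ g • y = y := Iff.rfl

theorem HH_comm (x y : V) : HH G x y = HH G y x := inf_comm _ _

theorem cj_St (g : G) (x : V) : cj g (St G x) = St G (g • x) := by
  ext h
  rw [mem_cj, mem_St, mem_St, mul_smul, mul_smul, inv_smul_eq_iff]

theorem cj_HH (g : G) (x y : V) : cj g (HH G x y) = HH G (g • x) (g • y) := by
  rw [cj_inf, cj_St, cj_St]

theorem NN_le_St (x : V) : NN G Γ x ≤ St G x := fun _ h => h.1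

theorem NN_le_HH {x y : V} (h : Γ.Adj x y) : NN G Γ x ≤ HH G x y := fun _ hg => ⟨hg.1, hg.2 y h⟩

theorem NN_le_HH' {x y : V} (h : Γ.Adj x y) : NN G Γ y ≤ HH G x y :=
  fun _ hg => ⟨hg.2 x h.symm, hg.1⟩

theorem mem_NN_iff_act {x : V} {ℓ : Fin n → Fin n → V} (hl : IsLab G Γ x ℓ) {g : G} :
    g ∈ NN G Γ x ↔ g • x = x ∧ Act ℓ g 1 := by
  rw [mem_NN]
  refine and_congr_right fun _ => ⟨?_, ?_⟩
  · intro h a b hab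
    exact h _ (hl.adj a b hab)
  · intro h z hz
    obtain ⟨a, b, hab, rfl⟩ := hl.surj z hz
    exact h a b hab

theorem IsLab.unique {x : V} {ℓ : Fin n → Fin n → V} (hl : IsLab G Γ x ℓ) {g : G}
    {σ τ : Equiv.Perm (Fin n)} (hn : 3 ≤ n) (h1 : Act ℓ g σ) (h2 : Act ℓ g τ) : σ = τ := by
  ext a
  have : Nontrivial (Fin n) := Fin.nontrivial_iff_two_le.2 (by omega)
  obtain ⟨b, hb⟩ := exists_ne a
  have h3 := (h1 a b hb.symm).symm.trans (h2 a b hb.symm)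
  rw [(hl.inj _ _ _ _ (fun h => hb.symm (σ.injective h)) (fun h => hb.symm (τ.injective h)) h3).1]

theorem IsLab.fix {x : V} {ℓ : Fin n → Fin n → V} (hl : IsLab G Γ x ℓ) {g : G}
    {σ : Equiv.Perm (Fin n)} (h1 : Act ℓ g σ) {a b : Fin n} (hab : a ≠ b)
    (h : g • ℓ a b = ℓ a b) : σ a = a ∧ σ b = b := by
  rw [h1 a b hab] at h
  exact hl.inj _ _ _ _ (fun h => hab (σ.injective h)) hab h

namespace LocPair

variable (hL : LocPair G Γ n)

include hL

theorem adj_iff (g : G) (u v : V) : Γ.Adj (g • u) (g • v) ↔ Γ.Adj u v := by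
  refine ⟨fun h => ?_, hL.adj g u v⟩
  simpa using hL.adj g⁻¹ _ _ h

theorem cj_NN (g : G) (x : V) : cj g (NN G Γ x) = NN G Γ (g • x) := by
  ext h
  rw [mem_cj, mem_NN, mem_NN, mul_smul, mul_smul, inv_smul_eq_iff]
  refine and_congr_right fun _ => ⟨?_, ?_⟩
  · intro h1 z hz
    have := h1 (g⁻¹ • z) (by rw [← hL.adj_iff g]; simpa using hz)
    rw [mul_smul, mul_smul] at this
    simpa using this
  · intro h1 z hz
    rw [mul_smul, mul_smul, h1 (g • z) (hL.adj g _ _ hz), inv_smul_smul]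

theorem nrm_St_NN (x : V) : Nrm (St G x) (NN G Γ x) := by
  rw [Nrm_iff_cj]
  intro g hg
  rw [hL.cj_NN, hg]

theorem nrm_HH_NN (x y : V) : Nrm (HH G x y) (NN G Γ x) := (hL.nrm_St_NN x).mono inf_le_left

theorem nrm_HH_NN' (x y : V) : Nrm (HH G x y) (NN G Γ y) := (hL.nrm_St_NN y).mono inf_le_right

theorem loc_trans {x y z : V} (hy : Γ.Adj x y) (hz : Γ.Adj x z) : ∃ g : G, g • x = x ∧ g • y = z := by
  obtain ⟨ℓ, hl⟩ := hL.lab x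
  obtain ⟨a, b, hab, rfl⟩ := hl.surj y hy
  obtain ⟨c, d, hcd, rfl⟩ := hl.surj z hz
  obtain ⟨σ, h1, h2⟩ := perm2 hab hcd
  obtain ⟨g, hg, hσ⟩ := hl.real σ
  exact ⟨g, hg, by rw [hσ a b hab, h1, h2]⟩

theorem arc_trans {x y x' y' : V} (h : Γ.Adj x y) (h' : Γ.Adj x' y') :
    ∃ g : G, g • x = x' ∧ g • y = y' := by
  obtain ⟨g, rfl⟩ := hL.trans x x'
  obtain ⟨k, hk, hk'⟩ := hL.loc_trans (hL.adj g _ _ h) h'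
  exact ⟨k * g, by rw [mul_smul, hk], by rw [mul_smul, hk']⟩

theorem exists_adj (hn : 3 ≤ n) (x : V) : ∃ y, Γ.Adj x y := by
  obtain ⟨ℓ, hl⟩ := hL.lab x
  exact ⟨_, hl.adj ⟨0, by omega⟩ ⟨1, by omega⟩ (by simp [Fin.ext_iff])⟩

omit hL in
theorem walk_induction (hc : Γ.Connected) (S : V → Prop) {x : V} (hx : S x)
    (hs : ∀ u v, S u → Γ.Adj u v → S v) (v : V) : S v := by
  obtain ⟨w⟩ := hc.preconnected x v
  induction w with
  | nil => exact hx
  | cons h _ ih => exact ih (hs _ _ hx h)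

theorem CP {x y : V} (h : Γ.Adj x y) {X : Subgroup G} (hX : X ≤ HH G x y)
    (h1 : Nrm (St G x) X) (h2 : Nrm (St G y) X) : X = ⊥ := by
  set D := Subgroup.normalizer (X : Set G) with hD
  have key : ∀ v : V, ∃ d ∈ D, v = d • x ∨ v = d • y := by
    apply walk_induction hL.conn (fun v => ∃ d ∈ D, v = d • x ∨ v = d • y) (x := x)
    · exact ⟨1, D.one_mem, by simp⟩
    · rintro u v ⟨d, hd, rfl | rfl⟩ huv
      · have : Γ.Adj x (d⁻¹ • v) := by rw [← hL.adj_iff d]; simpa using huv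
        obtain ⟨g, hg, hg'⟩ := hL.loc_trans h this
        refine ⟨d * g, D.mul_mem hd (Nrm_iff_le.1 h1 hg), .inr ?_⟩
        rw [mul_smul, hg']; simp
      · have : Γ.Adj y (d⁻¹ • v) := by rw [← hL.adj_iff d]; simpa using huv
        obtain ⟨g, hg, hg'⟩ := hL.loc_trans h.symm this
        refine ⟨d * g, D.mul_mem hd (Nrm_iff_le.1 h2 hg), .inl ?_⟩
        rw [mul_smul, hg']; simp
  rw [eq_bot_iff]
  intro k hk
  rw [Subgroup.mem_bot]
  apply hL.faithful
  intro v
  obtain ⟨d, hd, hv⟩ := key v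
  have : d⁻¹ * k * d ∈ X := by
    have := mem_normalizer_cj.1 hd
    rw [← this, mem_cj] at hk
    exact hk
  have h3 := hX this
  rw [mem_HH, mul_smul, mul_smul, mul_smul, mul_smul, inv_smul_eq_iff, inv_smul_eq_iff] at h3
  rcases hv with rfl | rfl
  · exact h3.1
  · exact h3.2

omit hL in
theorem F3 {x : V} {ℓ : Fin n → Fin n → V} (hl : IsLab G Γ x ℓ)
    {a b c c' : Fin n} (hab : a ≠ b) (hca : c ≠ a) (hcb : c ≠ b) (hca' : c' ≠ a) (hcb' : c' ≠ b)
    (hcc : c ≠ c')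
    {B : Subgroup G} (hB : B ≤ HH G x (ℓ a b)) (hN : Nrm (HH G x (ℓ a b)) B) (hB' : ¬ B ≤ NN G Γ x) :
    ∃ g ∈ B, ∃ σ, Act ℓ g σ ∧ σ a = a ∧ σ b = b ∧ σ c = c' := by
  obtain ⟨g, hg, hg'⟩ := Set.not_subset.1 hB'
  have hgx := hB hg
  obtain ⟨σ, hσ⟩ := hl.act g hgx.1
  obtain ⟨h1, h2⟩ := hl.fix hσ hab hgx.2
  have h3 : σ ≠ 1 := by
    rintro rfl
    exact hg' ((mem_NN_iff_act hl).2 ⟨hgx.1, hσ⟩)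
  obtain ⟨d, hd⟩ : ∃ d, σ d ≠ d := by
    by_contra! hcon
    exact h3 (Equiv.ext hcon)
  have hda : d ≠ a := by rintro rfl; exact hd h1
  have hdb : d ≠ b := by rintro rfl; exact hd h2
  have hea : σ d ≠ a := fun h => hda (σ.injective (h.trans h1.symm))
  have heb : σ d ≠ b := fun h => hdb (σ.injective (h.trans h2.symm))
  obtain ⟨τ, t1, t2, t3, t4⟩ := perm4 hab hda.symm hea.symm hdb.symm heb.symm hd.symm
    hab hca.symm hca'.symm hcb.symm hcb'.symm hcc
  obtain ⟨k, hk, hτ⟩ := hl.real τ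
  have hk' : k ∈ HH G x (ℓ a b) := ⟨hk, by
    change k • _ = _
    rw [hτ a b hab, t1, t2]⟩
  refine ⟨k * g * k⁻¹, hN k hk' g hg, τ * σ * τ⁻¹, (hτ.mul hσ).mul hτ.inv, ?_, ?_, ?_⟩
  · have : τ⁻¹ a = a := by rw [Equiv.Perm.inv_eq_iff_eq, t1]
    simp only [Equiv.Perm.mul_apply, this, h1, t1]
  · have : τ⁻¹ b = b := by rw [Equiv.Perm.inv_eq_iff_eq, t2]
    simp only [Equiv.Perm.mul_apply, this, h2, t2]
  · have : τ⁻¹ c = d := by rw [Equiv.Perm.inv_eq_iff_eq, t3]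
    simp only [Equiv.Perm.mul_apply, this, t4]

omit hL in
theorem exists_avoid (hn : 4 ≤ n) (a b c : Fin n) : ∃ d : Fin n, d ≠ a ∧ d ≠ b ∧ d ≠ c := by
  have : ∃ d, d ∉ ({a, b, c} : Finset (Fin n)) := by
    by_contra! hcon
    have h1 : (Finset.univ : Finset (Fin n)) ⊆ {a, b, c} := fun d _ => hcon d
    have h2 := (Finset.card_le_card h1).trans Finset.card_le_three
    rw [Finset.card_univ, Fintype.card_fin] at h2
    omega
  simpa [not_or] using this

omit hL in
theorem inv_aux (hn : 4 ≤ n) {x : V} {ℓ : Fin n → Fin n → V} (hl : IsLab G Γ x ℓ) {E : V → Prop}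
    (hE : ∀ u, Γ.Adj x u → ∃ B : Subgroup G, B ≤ HH G x u ∧ Nrm (HH G x u) B ∧ ¬ B ≤ NN G Γ x ∧
      ∀ g ∈ B, ∀ z, Γ.Adj x z → E z → E (g • z))
    {c d d' : Fin n} (hcd : c ≠ d) (hcd' : c ≠ d') (h : E (ℓ c d)) : E (ℓ c d') := by
  by_cases hdd : d = d'
  · subst hdd; exact h
  obtain ⟨f, h1, h2, h3⟩ := exists_avoid hn c d d'
  obtain ⟨B, hB, hN, hB', hinv⟩ := hE _ (hl.adj c f h1.symm)
  obtain ⟨g, hg, σ, hσ, s1, s2, s3⟩ := F3 hl h1.symm hcd.symm h2.symm hcd'.symm h3.symm hdd hB hN hB'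
  have := hinv g hg _ (hl.adj c d hcd) h
  rwa [hσ c d hcd, s1, s3] at this

omit hL in
theorem inv_lab (hn : 4 ≤ n) {x : V} {ℓ : Fin n → Fin n → V} (hl : IsLab G Γ x ℓ) {E : V → Prop}
    (hE : ∀ u, Γ.Adj x u → ∃ B : Subgroup G, B ≤ HH G x u ∧ Nrm (HH G x u) B ∧ ¬ B ≤ NN G Γ x ∧
      ∀ g ∈ B, ∀ z, Γ.Adj x z → E z → E (g • z))
    {c d c' d' : Fin n} (hcd : c ≠ d) (hcd' : c' ≠ d') (h : E (ℓ c d)) : E (ℓ c' d') := by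
  obtain ⟨f, h1, h2, -⟩ := exists_avoid hn c c' c
  have e1 : E (ℓ c f) := inv_aux hn hl hE hcd h1.symm h
  have e2 : E (ℓ c' f) := inv_aux hn hl.swap hE h1 h2 e1
  exact inv_aux hn hl hE h2.symm hcd' e2

theorem INV (hn : 4 ≤ n) {x : V} {E : V → Prop}
    (hE : ∀ u, Γ.Adj x u → ∃ B : Subgroup G, B ≤ HH G x u ∧ Nrm (HH G x u) B ∧ ¬ B ≤ NN G Γ x ∧
      ∀ g ∈ B, ∀ z, Γ.Adj x z → E z → E (g • z))
    {z z' : V} (hz : Γ.Adj x z) (hz' : Γ.Adj x z') (h : E z) : E z' := by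
  obtain ⟨ℓ, hl⟩ := hL.lab x
  obtain ⟨a, b, hab, rfl⟩ := hl.surj z hz
  obtain ⟨c, d, hcd, rfl⟩ := hl.surj z' hz'
  exact inv_lab hn hl hE hab hcd h

theorem GEN (hn : 4 ≤ n) {x y : V} (hxy : Γ.Adj x y) {Q : Subgroup G} (hQ : HH G x y ≤ Q)
    (hB : ∀ u, Γ.Adj x u → ∃ B : Subgroup G, B ≤ HH G x u ∧ Nrm (HH G x u) B ∧ ¬ B ≤ NN G Γ x ∧
      B ≤ Q) : St G x ≤ Q := by
  intro g hg
  have := hL.INV hn (x := x) (E := fun z => ∃ q ∈ Q, q • x = x ∧ q • y = z) (z := y) (z' := g • y) ?_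
    hxy ?_ ⟨1, Q.one_mem, by simp, by simp⟩
  · obtain ⟨q, hq, hqx, hqy⟩ := this
    have h1 : q⁻¹ * g ∈ HH G x y := by
      rw [mem_HH, mul_smul, mul_smul, inv_smul_eq_iff, inv_smul_eq_iff, hqx, hqy]
      exact ⟨hg, rfl⟩
    have := Q.mul_mem hq (hQ h1)
    simpa using this
  · intro u hu
    obtain ⟨B, h1, h2, h3, h4⟩ := hB u hu
    refine ⟨B, h1, h2, h3, ?_⟩
    rintro k hk z _ ⟨q, hq, hqx, rfl⟩
    refine ⟨k * q, Q.mul_mem (h4 hk) hq, ?_, mul_smul _ _ _⟩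
    rw [mul_smul, hqx]
    exact (h1 hk).1
  · have := hL.adj g _ _ hxy
    rwa [mem_St.1 hg] at this

theorem CPG (hn : 4 ≤ n) {x y : V} (hxy : Γ.Adj x y) {X : Subgroup G} (hX : X ≤ HH G x y)
    (hN : Nrm (HH G x y) X)
    (h1 : ∀ u, Γ.Adj x u → ∃ B : Subgroup G, B ≤ HH G x u ∧ Nrm (HH G x u) B ∧ ¬ B ≤ NN G Γ x ∧
      Nrm B X)
    (h2 : ∀ u, Γ.Adj y u → ∃ B : Subgroup G, B ≤ HH G y u ∧ Nrm (HH G y u) B ∧ ¬ B ≤ NN G Γ y ∧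
      Nrm B X) : X = ⊥ := by
  apply hL.CP hxy hX
  · rw [Nrm_iff_le]
    apply hL.GEN hn hxy (Nrm_iff_le.1 hN)
    intro u hu
    obtain ⟨B, b1, b2, b3, b4⟩ := h1 u hu
    exact ⟨B, b1, b2, b3, Nrm_iff_le.1 b4⟩
  · rw [Nrm_iff_le]
    apply hL.GEN hn hxy.symm (by rw [HH_comm]; exact Nrm_iff_le.1 hN)
    intro u hu
    obtain ⟨B, b1, b2, b3, b4⟩ := h2 u hu
    exact ⟨B, b1, b2, b3, Nrm_iff_le.1 b4⟩

/-- The case `n = 3`. -/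
theorem case3 (hn : n = 3) {x y : V} (hxy : Γ.Adj x y) : HH G x y = ⊥ := by
  subst hn
  have key : ∀ x y, Γ.Adj x y → HH G x y ≤ NN G Γ x := by
    intro x y hxy g hg
    obtain ⟨ℓ, hl⟩ := hL.lab x
    obtain ⟨a, b, hab, rfl⟩ := hl.surj y hxy
    obtain ⟨σ, hσ⟩ := hl.act g hg.1
    obtain ⟨h1, h2⟩ := hl.fix hσ hab hg.2
    have : σ = 1 := by
      clear hσ hg hxy
      revert σ a b
      decide
    subst this
    exact (mem_NN_iff_act hl).2 ⟨hg.1, hσ⟩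
  apply hL.CP hxy le_rfl
  · rw [le_antisymm (key x y hxy) (NN_le_HH hxy)]; exact hL.nrm_St_NN x
  · rw [HH_comm, le_antisymm (key y x hxy.symm) (NN_le_HH hxy.symm)]; exact hL.nrm_St_NN y

end LocPair

end GraphSetup

section Nonabelian

set_option linter.unusedSectionVars false

variable {G V : Type*} [Group G] [Finite G] [MulAction G V] {Γ : SimpleGraph V} {n : ℕ}

theorem eq_of_le_card {A B : Subgroup G} (h : A ≤ B) (hc : Nat.card A = Nat.card B) : A = B :=
  Subgroup.eq_of_le_of_card_ge h hc.ge

theorem LocPair.card_NN (hL : LocPair G Γ n) (x y : V) :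
    Nat.card (NN G Γ x) = Nat.card (NN G Γ y) := by
  obtain ⟨g, rfl⟩ := hL.trans x y
  rw [← hL.cj_NN, cj_card]

theorem Subn.good_step (hL : LocPair G Γ n) {M : Subgroup G} {v w : V} (hvw : Γ.Adj v w)
    (hv : Subn M (NN G Γ v)) (hw : M ≤ NN G Γ w) : Subn M (NN G Γ w) := by
  have h1 : Subn M (NN G Γ v ⊓ NN G Γ w) := hv.restrict (le_inf hv.le hw) inf_le_left
  refine h1.trans (Subn.of_nrm inf_le_right ?_)
  exact ((hL.nrm_HH_NN v w).mono (NN_le_HH' hvw)).inf (Nrm.refl _)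

theorem comm_le_of_cen_conj {M N S : Subgroup G} {h : G} (hN : Nrm S N) (hM : M ≤ S) (hNS : N ≤ S)
    (hh : h ∈ N) (hc : Cen M (cj h M)) : ⁅M, M⁆ ≤ N := by
  rw [Subgroup.commutator_le]
  intro a ha b hb
  set b' := h * b * h⁻¹ with hb'
  have h1 : a * b' = b' * a := hc a ha b' (conj_mem_cj hb)
  have hk : b⁻¹ * b' ∈ N := by
    have := N.mul_mem (hN b⁻¹ (S.inv_mem (hM hb)) h hh) (N.inv_mem hh)
    simpa [hb', mul_assoc] using this
  set k := b⁻¹ * b' with hkdef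
  have hbk : b = b' * k⁻¹ := by simp [hkdef]
  have hb'S : b' ∈ S := S.mul_mem (S.mul_mem (hNS hh) (hM hb)) (S.inv_mem (hNS hh))
  rw [commutatorElement_def]
  have e : a * b * a⁻¹ * b⁻¹ = b' * ((a * k⁻¹ * a⁻¹) * k) * b'⁻¹ := by
    rw [hbk]
    calc a * (b' * k⁻¹) * a⁻¹ * (b' * k⁻¹)⁻¹ = (a * b') * k⁻¹ * a⁻¹ * k * b'⁻¹ := by group
      _ = _ := by rw [h1]; group
  rw [e]
  exact hN b' hb'S _ (N.mul_mem (hN a (hM ha) _ (N.inv_mem hk)) hk)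

theorem LocPair.nonabelian (hL : LocPair G Γ n) (hn : 4 ≤ n) {x y : V} (hxy : Γ.Adj x y)
    {M : Subgroup G} (hM : M ≠ ⊥) (simple : ∀ K, Nrm M K → K ≤ M → K = ⊥ ∨ K = M)
    (perf : ⁅M, M⁆ = M) (hx : Subn M (NN G Γ x)) (hy : Subn M (NN G Γ y)) : False := by
  have wl : ∀ (L X : Subgroup G), Subn M L → Subn X L → Nat.card X = Nat.card M →
      M = X ∨ Cen M X := by
    intro L X h1 h2 hc
    rcases wielandt simple perf _ L X le_rfl h1 h2 with h | h
    · exact .inl (eq_of_le_card h hc.symm)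
    · exact .inr h
  obtain ⟨v, u0, w, hv, hvu, hu0, hvw, hw⟩ : ∃ v u0 w, Subn M (NN G Γ v) ∧ Γ.Adj v u0 ∧
      Subn M (NN G Γ u0) ∧ Γ.Adj v w ∧ ¬ Subn M (NN G Γ w) := by
    by_contra! hcon
    have key := LocPair.walk_induction hL.conn
      (fun v => Subn M (NN G Γ v) ∧ ∃ u, Γ.Adj v u ∧ Subn M (NN G Γ u)) (x := x)
      ⟨hx, y, hxy, hy⟩ (by
        rintro u v ⟨h1, z, h2, h3⟩ huv
        exact ⟨hcon u z v h1 h2 h3 huv, u, huv.symm, h1⟩)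
    apply hM
    rw [eq_bot_iff]
    intro m hm
    rw [Subgroup.mem_bot]
    apply hL.faithful
    intro v
    exact ((key v).1.le hm).1
  have inv : ∀ g : G, cj g M = M → ∀ z, ¬ Subn M (NN G Γ z) → ¬ Subn M (NN G Γ (g • z)) := by
    intro g hg z hz h
    apply hz
    have := h.cj g⁻¹
    rwa [hL.cj_NN, inv_smul_smul, ← hg, cj_inv_cj] at this
  have hfin := hL.INV hn (x := v) (E := fun z => ¬ Subn M (NN G Γ z)) (z := w) (z' := u0) ?_
    hvw hvu hw
  · exact hfin hu0
  intro u hu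
  by_cases hgu : Subn M (NN G Γ u)
  · obtain ⟨h, hh, hhw⟩ := hL.loc_trans hvw hu
    obtain ⟨t, ht1, ht2⟩ := hL.arc_trans hu hu.symm
    have a1 : Subn (cj h M) (NN G Γ v) := by
      have := hv.cj h
      rwa [hL.cj_NN, hh] at this
    have a2 : Subn (cj t (cj h M)) (NN G Γ u) := by
      have := a1.cj t
      rwa [hL.cj_NN, ht1] at this
    have a3 : ¬ cj t (cj h M) ≤ NN G Γ v := by
      rw [cj_le_iff, hL.cj_NN, ← ht2, inv_smul_smul, cj_le_iff, hL.cj_NN, ← hhw, inv_smul_smul]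
      intro h
      exact hw (hv.good_step hL hvw h)
    set M3 := cj t (cj h M) with hM3
    refine ⟨⨆ k : HH G v u, cj (k : G) M3, ?_, ?_, ?_, ?_⟩
    · apply iSup_le
      intro k
      have h1 : M3 ≤ HH G v u := a2.le.trans (NN_le_HH' hu)
      have h2 := cj_mono (k : G) h1
      rwa [(Nrm.refl _).cj_eq k.2] at h2
    · rw [Nrm_iff_cj]
      intro g hg
      rw [cj_iSup]
      apply le_antisymm
      · apply iSup_le
        intro k
        rw [← cj_mul]
        exact le_iSup (fun k : HH G v u => cj (k : G) M3) (⟨g, hg⟩ * k)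
      · apply iSup_le
        intro k
        have := le_iSup (fun k : HH G v u => cj g (cj (k : G) M3)) (⟨g, hg⟩⁻¹ * k)
        simpa [← cj_mul] using this
    · intro hle
      apply a3
      have := (le_iSup (fun k : HH G v u => cj (k : G) M3) 1).trans hle
      simpa [cj_one] using this
    · have hcen : Cen M (⨆ k : HH G v u, cj (k : G) M3) := by
        apply Cen.iSup
        intro k
        have b1 : Subn (cj (k : G) M3) (NN G Γ u) := by
          have := a2.cj (k : G)
          rwa [hL.cj_NN, k.2.2] at this
        rcases wl _ _ hgu b1 (by rw [hM3, cj_card, cj_card, cj_card]) with b2 | b2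
        · exfalso
          apply a3
          have : cj (k : G) M3 ≤ NN G Γ v := b2 ▸ hv.le
          rw [cj_le_iff, hL.cj_NN] at this
          have h3 : (k : G)⁻¹ • v = v := by rw [inv_smul_eq_iff]; exact k.2.1.symm
          rwa [h3] at this
        · exact b2
      intro g hg z _ hz
      exact inv g (hcen.symm.nrm.cj_eq hg) z hz
  · have hMu : ¬ M ≤ NN G Γ u := fun h => hgu (hv.good_step hL hu h)
    refine ⟨NN G Γ u, NN_le_HH' hu, hL.nrm_HH_NN' v u, ?_, ?_⟩
    · intro hle
      have := eq_of_le_card hle (hL.card_NN u v)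
      exact hMu (this ▸ hv.le)
    · intro g hg z _ hz
      refine inv g ?_ z hz
      have b1 : Subn (cj g M) (NN G Γ v) := by
        have := hv.cj g
        rwa [hL.cj_NN, hg.2 v hu.symm] at this
      rcases wl _ _ hv b1 (cj_card _ _) with b2 | b2
      · exact b2.symm
      · exfalso
        apply hMu
        have := comm_le_of_cen_conj (hL.nrm_St_NN u)
          (hv.le.trans ((NN_le_HH hu).trans inf_le_right)) (NN_le_St u) hg b2
        rwa [perf] at this

end Nonabelian

section PermLemmas

set_option linter.unusedSimpArgs false

theorem cyc_dvd {α : Type*} {σ : Equiv.Perm α} {c : α} {r q : ℕ} (hr : r.Prime)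
    (hc : (σ ^ r) c = c) (h1 : σ c ≠ c) (hq : σ ^ q = 1) : r ∣ q := by
  have := Fact.mk hr
  have h2 : Function.minimalPeriod σ c = r := by
    apply Function.minimalPeriod_eq_prime
    · rw [Function.IsPeriodicPt, Function.IsFixedPt, ← Equiv.Perm.coe_pow]; exact hc
    · exact h1
  rw [← h2]
  apply Function.IsPeriodicPt.minimalPeriod_dvd
  rw [Function.IsPeriodicPt, Function.IsFixedPt, ← Equiv.Perm.coe_pow, hq]; rfl

theorem cyc_prime {α : Type*} {p : ℕ} (hp : p.Prime) {D : Subgroup (Equiv.Perm α)}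
    (hD : IsPGroup p D) {σ : Equiv.Perm α} (hσ : σ ∈ D) {c : α} {r : ℕ} (hr : r.Prime)
    (hc : (σ ^ r) c = c) (h1 : σ c ≠ c) : p = r := by
  obtain ⟨k, hk⟩ := hD ⟨σ, hσ⟩
  have hk' : σ ^ p ^ k = 1 := by simpa [Subtype.ext_iff] using hk
  have := cyc_dvd hr hc h1 hk'
  exact ((Nat.prime_dvd_prime_iff_eq hr hp).1 (hr.dvd_of_dvd_pow this)).symm

theorem exists_notMem {n : ℕ} (s : Finset (Fin n)) (hs : s.card < n) : ∃ d, d ∉ s := by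
  by_contra! hcon
  have h1 : (Finset.univ : Finset (Fin n)) ⊆ s := fun d _ => hcon d
  have h2 := Finset.card_le_card h1
  rw [Finset.card_univ, Fintype.card_fin] at h2
  omega

variable {n p : ℕ}

theorem perm_semireg (hp : p.Prime) {D : Subgroup (Equiv.Perm (Fin n))} (hD : IsPGroup p D)
    {a b : Fin n} (hfix : ∀ σ ∈ D, σ a = a ∧ σ b = b)
    (hnor : ∀ τ : Equiv.Perm (Fin n), τ a = a → τ b = b → ∀ σ ∈ D, τ * σ * τ⁻¹ ∈ D)
    {σ : Equiv.Perm (Fin n)} (hσ : σ ∈ D) {c : Fin n} (hca : c ≠ a) (hcb : c ≠ b)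
    (hc : σ c = c) : σ = 1 := by
  by_contra hne
  obtain ⟨d, hd⟩ : ∃ d, σ d ≠ d := by
    by_contra! hcon
    exact hne (Equiv.ext hcon)
  obtain ⟨ha, hb⟩ := hfix σ hσ
  have hda : d ≠ a := by rintro rfl; exact hd ha
  have hdb : d ≠ b := by rintro rfl; exact hd hb
  have hdc : d ≠ c := by rintro rfl; exact hd hc
  obtain ⟨e, he⟩ : ∃ e, σ d = e := ⟨_, rfl⟩
  have hea : e ≠ a := fun h => hda (σ.injective (he.trans (h.trans ha.symm)))
  have heb : e ≠ b := fun h => hdb (σ.injective (he.trans (h.trans hb.symm)))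
  have hec : e ≠ c := fun h => hdc (σ.injective (he.trans (h.trans hc.symm)))
  have hed : e ≠ d := fun h => hd (he.trans h)
  have hcm : ∀ τ : Equiv.Perm (Fin n), τ a = a → τ b = b → σ * (τ * σ⁻¹ * τ⁻¹) ∈ D :=
    fun τ h1 h2 => D.mul_mem hσ (hnor τ h1 h2 _ (D.inv_mem hσ))
  have hκ : Equiv.swap c e * Equiv.swap c d ∈ D := by
    have := hcm (Equiv.swap c d) (Equiv.swap_apply_of_ne_of_ne hca.symm hda.symm)
      (Equiv.swap_apply_of_ne_of_ne hcb.symm hdb.symm)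
    have e1 : σ * (Equiv.swap c d * σ⁻¹ * (Equiv.swap c d)⁻¹) =
        Equiv.swap c e * Equiv.swap c d := by
      rw [← hc, ← he, Equiv.swap_apply_apply, hc, Equiv.swap_inv]; group
    rwa [e1] at this
  have hp3 : p = 3 := by
    apply cyc_prime hp hD hκ (c := c) Nat.prime_three
    · simp [pow_succ, Equiv.swap_apply_of_ne_of_ne, hec, hed, hdc, hed.symm, hec.symm, hdc.symm]
    · simp [Equiv.swap_apply_of_ne_of_ne, hdc, hed.symm]
  by_cases hf : ∃ f, f ∉ ({a, b, c, d, e} : Finset (Fin n))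
  · obtain ⟨f, hf⟩ := hf
    simp only [Finset.mem_insert, Finset.mem_singleton, not_or] at hf
    obtain ⟨fa, fb, fc, fd, fe⟩ := hf
    have hκ' : Equiv.swap c f * Equiv.swap c d ∈ D := by
      have := hnor (Equiv.swap e f) (Equiv.swap_apply_of_ne_of_ne hea.symm (Ne.symm fa))
        (Equiv.swap_apply_of_ne_of_ne heb.symm (Ne.symm fb)) _ hκ
      have e1 : Equiv.swap e f * (Equiv.swap c e * Equiv.swap c d) * (Equiv.swap e f)⁻¹ =
        Equiv.swap c f * Equiv.swap c d := by
        have s1 := Equiv.swap_apply_apply (Equiv.swap e f) c e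
        have s2 := Equiv.swap_apply_apply (Equiv.swap e f) c d
        rw [Equiv.swap_apply_of_ne_of_ne hec.symm (Ne.symm fc), Equiv.swap_apply_left] at s1
        rw [Equiv.swap_apply_of_ne_of_ne hec.symm (Ne.symm fc),
          Equiv.swap_apply_of_ne_of_ne hed.symm (Ne.symm fd)] at s2
        calc _ = (Equiv.swap e f * Equiv.swap c e * (Equiv.swap e f)⁻¹) *
              (Equiv.swap e f * Equiv.swap c d * (Equiv.swap e f)⁻¹) := by group
          _ = _ := by rw [← s1, ← s2]
      rwa [e1] at this
    have := cyc_prime hp hD (D.mul_mem hκ hκ') (c := c) Nat.prime_two ?_ ?_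
    · omega
    · simp [pow_succ, Equiv.swap_apply_of_ne_of_ne, hec, hed, hdc, hed.symm, hec.symm, hdc.symm,
        fc, fd, fe, Ne.symm fc, Ne.symm fd, Ne.symm fe]
    · simp [Equiv.swap_apply_of_ne_of_ne, hec, hed, hdc, hed.symm, hec.symm, hdc.symm,
        fc, fd, fe, Ne.symm fc, Ne.symm fd, Ne.symm fe]
  · have hse : σ e = d := by
      by_contra hcon
      apply hf
      refine ⟨σ e, ?_⟩
      simp only [Finset.mem_insert, Finset.mem_singleton, not_or]
      refine ⟨fun h => hea (σ.injective (h.trans ha.symm)),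
        fun h => heb (σ.injective (h.trans hb.symm)), fun h => hec (σ.injective (h.trans hc.symm)),
        hcon, fun h => hed (σ.injective (h.trans he.symm))⟩
    have := cyc_prime hp hD hσ (c := d) Nat.prime_two ?_ hd
    · omega
    · simp [pow_succ, he, hse]

theorem perm_bound (hn : 4 ≤ n) (hp : p.Prime) {D : Subgroup (Equiv.Perm (Fin n))}
    (hD : IsPGroup p D)
    {a b : Fin n} (hab : a ≠ b) (hfix : ∀ σ ∈ D, σ a = a ∧ σ b = b)
    (hnor : ∀ τ : Equiv.Perm (Fin n), τ a = a → τ b = b → ∀ σ ∈ D, τ * σ * τ⁻¹ ∈ D)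
    (hD1 : D ≠ ⊥) : (n = 4 ∧ p = 2) ∨ (n = 5 ∧ p = 3) ∨ (n = 6 ∧ p = 2) := by
  have sr := @perm_semireg n p hp D hD a b hfix hnor
  obtain ⟨⟨σ, hσ⟩, hσ1⟩ := (Subgroup.ne_bot_iff_exists_ne_one).1 hD1
  have hσ1 : σ ≠ 1 := fun h => hσ1 (Subtype.ext h)
  obtain ⟨ha, hb⟩ := hfix σ hσ
  have hn6 : n ≤ 6 := by
    by_contra hn6
    obtain ⟨c, hc⟩ : ∃ d, σ d ≠ d := by
      by_contra! hcon
      exact hσ1 (Equiv.ext hcon)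
    obtain ⟨d, hd⟩ : ∃ e, σ c = e := ⟨_, rfl⟩
    rw [hd] at hc
    have hca : c ≠ a := by rintro rfl; exact hc (hd.symm.trans ha)
    have hcb : c ≠ b := by rintro rfl; exact hc (hd.symm.trans hb)
    obtain ⟨e, he⟩ := exists_notMem ({a, b, c, d} : Finset (Fin n))
      (lt_of_le_of_lt Finset.card_le_four (by omega))
    simp only [Finset.mem_insert, Finset.mem_singleton, not_or] at he
    obtain ⟨ea, eb, ec, ed⟩ := he
    have hee : σ e ≠ e := fun h => hσ1 (sr hσ ea eb h)
    obtain ⟨f, hf⟩ := exists_notMem ({a, b, c, d, e, σ e} : Finset (Fin n))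
      (lt_of_le_of_lt Finset.card_le_six (by omega))
    simp only [Finset.mem_insert, Finset.mem_singleton, not_or] at hf
    obtain ⟨fa, fb, fc, fd, fe, fse⟩ := hf
    have hκ : Equiv.swap d (σ e) * Equiv.swap c e ∈ D := by
      have := D.mul_mem hσ (hnor (Equiv.swap c e)
        (Equiv.swap_apply_of_ne_of_ne hca.symm (Ne.symm ea))
        (Equiv.swap_apply_of_ne_of_ne hcb.symm (Ne.symm eb)) _ (D.inv_mem hσ))
      have e1 : σ * (Equiv.swap c e * σ⁻¹ * (Equiv.swap c e)⁻¹) =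
          Equiv.swap d (σ e) * Equiv.swap c e := by
        rw [← hd, Equiv.swap_apply_apply, Equiv.swap_inv]; group
      rwa [e1] at this
    have h1 := sr hκ fa fb (by simp [Equiv.swap_apply_of_ne_of_ne, fc, fd, fe, fse])
    have h2 := congrArg (fun τ : Equiv.Perm (Fin n) => τ c) h1
    simp [Equiv.swap_apply_of_ne_of_ne, ed, hee.symm, ec] at h2
  have hmod : n ≡ 2 [MOD p] := by
    have := Fact.mk hp
    have h1 := hD.card_modEq_card_fixedPoints (Fin n)
    have h2 : fixedPoints D (Fin n) = {a, b} := by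
      ext c
      rw [mem_fixedPoints]
      constructor
      · intro h
        by_contra hcon
        simp only [Set.mem_insert_iff, Set.mem_singleton_iff, not_or] at hcon
        exact hσ1 (sr hσ hcon.1 hcon.2 (h ⟨σ, hσ⟩))
      · rintro (rfl | rfl) ⟨τ, hτ⟩
        · exact (hfix τ hτ).1
        · exact (hfix τ hτ).2
    rw [h2, Nat.card_fin, Nat.card_coe_set_eq, Set.ncard_pair hab] at h1
    exact h1
  have hdvd : p ∣ n - 2 := (Nat.modEq_iff_dvd' (by omega)).1 hmod.symm
  have hple : p ≤ n - 2 := Nat.le_of_dvd (by omega) hdvd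
  have := hp.two_le
  interval_cases n <;> interval_cases p <;> revert hdvd hp <;> decide

end PermLemmas

section Abelian

set_option linter.unusedSectionVars false

variable {G V : Type*} [Group G] [Finite G] [MulAction G V] {Γ : SimpleGraph V} {n p : ℕ}

/-- `O_p` of the kernel of the local action. -/
def OO (G : Type*) {V : Type*} [Group G] [MulAction G V] (Γ : SimpleGraph V) (p : ℕ) (x : V) :
    Subgroup G := Op p (NN G Γ x)

/-- `O_p` of the arc stabiliser. -/
def TT (G : Type*) {V : Type*} [Group G] [MulAction G V] (p : ℕ) (x y : V) :
    Subgroup G := Op p (HH G x y)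

/-- Pointwise stabiliser of the balls of radius two around `x` and `y`. -/
def PP (G : Type*) {V : Type*} [Group G] [MulAction G V] (Γ : SimpleGraph V) (x y : V) :
    Subgroup G := ⨅ z, ⨅ (_ : Γ.Adj x z ∨ Γ.Adj y z), NN G Γ z

/-- The image of a subgroup under the local action. -/
def img (ℓ : Fin n → Fin n → V) (B : Subgroup G) : Subgroup (Equiv.Perm (Fin n)) where
  carrier := {σ | ∃ g ∈ B, Act ℓ g σ}
  one_mem' := ⟨1, B.one_mem, Act.one⟩
  mul_mem' := by
    rintro σ τ ⟨g, hg, hσ⟩ ⟨k, hk, hτ⟩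
    exact ⟨g * k, B.mul_mem hg hk, hσ.mul hτ⟩
  inv_mem' := by
    rintro σ ⟨g, hg, hσ⟩
    exact ⟨g⁻¹, B.inv_mem hg, hσ.inv⟩

/-- The setting of the abelian case. -/
structure ACtx (G : Type*) {V : Type*} [Group G] [MulAction G V] (Γ : SimpleGraph V) (n p : ℕ) :
    Prop extends LocPair G Γ n where
  hn : 4 ≤ n
  hp : p.Prime
  hX : ∀ x y, Γ.Adj x y → Op p (PP G Γ x y) ≠ ⊥

theorem TT_comm (x y : V) : TT G p x y = TT G p y x := by rw [TT, HH_comm]; rfl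

theorem cj_TT (g : G) (x y : V) : cj g (TT G p x y) = TT G p (g • x) (g • y) := by
  rw [TT, Op_cj, cj_HH]; rfl

theorem TT_le (x y : V) : TT G p x y ≤ HH G x y := Op_le _ _

theorem TT_nrm (x y : V) : Nrm (HH G x y) (TT G p x y) := Op_nrm _ _

theorem OO_le (x : V) : OO G Γ p x ≤ NN G Γ x := Op_le _ _

theorem TT_inf_le {x y : V} (h : Γ.Adj x y) : TT G p x y ⊓ NN G Γ x ≤ OO G Γ p x :=
  Op_inf_le p (NN_le_HH h)

theorem PP_le {x y z : V} (h : Γ.Adj x z ∨ Γ.Adj y z) : PP G Γ x y ≤ NN G Γ z :=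
  iInf_le_of_le z (iInf_le _ h)

namespace ACtx

variable (h : ACtx G Γ n p)
include h

theorem cj_OO (g : G) (x : V) : cj g (OO G Γ p x) = OO G Γ p (g • x) := by
  rw [OO, Op_cj, h.cj_NN]; rfl

theorem OO_nrm (x : V) : Nrm (St G x) (OO G Γ p x) := (h.nrm_St_NN x).Op p

theorem OO_le_TT {x y : V} (hxy : Γ.Adj x y) : OO G Γ p x ≤ TT G p x y :=
  (Subn.of_nrm (NN_le_HH hxy) (h.nrm_HH_NN x y)).Op_le p

theorem OO_le_TT' {x y : V} (hxy : Γ.Adj x y) : OO G Γ p y ≤ TT G p x y := by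
  rw [TT_comm]; exact h.OO_le_TT hxy.symm

theorem cj_PP (g : G) (x y : V) : cj g (PP G Γ x y) = PP G Γ (g • x) (g • y) := by
  ext k
  simp only [mem_cj, PP, Subgroup.mem_iInf]
  constructor
  · intro hk z hz
    have h2 := hk (g⁻¹ • z) (by
      rw [← h.adj_iff g x, ← h.adj_iff g y, smul_inv_smul]; exact hz)
    rw [← mem_cj, h.cj_NN, smul_inv_smul] at h2
    exact h2
  · intro hk z hz
    have h2 := hk (g • z) (by rwa [h.adj_iff g, h.adj_iff g])
    rwa [← h.cj_NN, mem_cj] at h2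

theorem PP_comm (x y : V) : PP G Γ x y = PP G Γ y x := by
  unfold PP; simp only [or_comm]

theorem PP_nrm (x y : V) : Nrm (HH G x y) (PP G Γ x y) := by
  rw [Nrm_iff_cj]
  intro g hg
  rw [h.cj_PP, hg.1, hg.2]

theorem PP_subn {x y z : V} (hxy : Γ.Adj x y) (hz : Γ.Adj x z) :
    Subn (PP G Γ x y) (NN G Γ z) := by
  have h1 : PP G Γ x y ≤ NN G Γ x := PP_le (.inr hxy.symm)
  have h2 : PP G Γ x y ≤ NN G Γ z := PP_le (.inl hz)
  have h3 : Subn (PP G Γ x y) (NN G Γ x) :=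
    Subn.of_nrm h1 ((h.PP_nrm x y).mono (NN_le_HH hxy))
  exact h3.good_step h.toLocPair hz h2

theorem XX_le {x y z : V} (hxy : Γ.Adj x y) (hz : Γ.Adj x z ∨ Γ.Adj y z) :
    Op p (PP G Γ x y) ≤ OO G Γ p z := by
  rcases hz with hz | hz
  · exact (h.PP_subn hxy hz).Op_le p
  · rw [h.PP_comm]; exact (h.PP_subn hxy.symm hz).Op_le p

theorem TT_not_le {x y : V} (hxy : Γ.Adj x y) : ¬ TT G p x y ≤ NN G Γ x := by
  have key : ∀ x y, Γ.Adj x y → TT G p x y ≤ NN G Γ x → TT G p x y = OO G Γ p x := by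
    intro x y hxy hle
    exact le_antisymm ((le_inf le_rfl hle).trans (TT_inf_le hxy)) (h.OO_le_TT hxy)
  intro hle
  obtain ⟨t, t1, t2⟩ := h.arc_trans hxy hxy.symm
  have hle2 : TT G p y x ≤ NN G Γ y := by
    have := cj_mono t hle
    rwa [cj_TT, h.cj_NN, t1, t2] at this
  have h1 := key x y hxy hle
  have h2 := key y x hxy.symm hle2
  have h3 : TT G p x y = ⊥ := by
    apply h.CP hxy (TT_le x y)
    · rw [h1]; exact h.OO_nrm x
    · rw [TT_comm, h2]; exact h.OO_nrm y
  apply h.hX x y hxy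
  rw [eq_bot_iff, ← h3, h1]
  exact h.XX_le hxy (.inr hxy.symm)

theorem img_facts {x : V} {ℓ : Fin n → Fin n → V} (hl : IsLab G Γ x ℓ) {a b : Fin n}
    (hab : a ≠ b) {B : Subgroup G} (hB : B ≤ HH G x (ℓ a b)) (hN : Nrm (HH G x (ℓ a b)) B)
    (hBp : IsPGroup p B) :
    IsPGroup p (img ℓ B) ∧ (∀ σ ∈ img ℓ B, σ a = a ∧ σ b = b) ∧
    (∀ τ : Equiv.Perm (Fin n), τ a = a → τ b = b → ∀ σ ∈ img ℓ B, τ * σ * τ⁻¹ ∈ img ℓ B) := by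
  have hn := h.hn
  refine ⟨?_, ?_, ?_⟩
  · rintro ⟨σ, g, hg, hσ⟩
    obtain ⟨k, hk⟩ := hBp ⟨g, hg⟩
    have hk' : g ^ p ^ k = 1 := by simpa [Subtype.ext_iff] using hk
    refine ⟨k, Subtype.ext ?_⟩
    have h1 := hσ.pow (p ^ k)
    rw [hk'] at h1
    exact hl.unique (by omega) h1 Act.one
  · rintro σ ⟨g, hg, hσ⟩
    exact hl.fix hσ hab (hB hg).2
  · rintro τ ta tb σ ⟨g, hg, hσ⟩
    obtain ⟨k, hk, hτ⟩ := hl.real τ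
    refine ⟨k * g * k⁻¹, hN k ⟨hk, ?_⟩ g hg, (hτ.mul hσ).mul hτ.inv⟩
    change k • _ = _
    rw [hτ a b hab, ta, tb]

theorem T_semireg {x : V} {ℓ : Fin n → Fin n → V} (hl : IsLab G Γ x ℓ) {a b : Fin n}
    (hab : a ≠ b) {g : G} (hg : g ∈ TT G p x (ℓ a b)) {σ : Equiv.Perm (Fin n)} (hσ : Act ℓ g σ)
    {c : Fin n} (hca : c ≠ a) (hcb : c ≠ b) (hc : σ c = c) : g ∈ NN G Γ x := by
  obtain ⟨f1, f2, f3⟩ := h.img_facts hl hab (TT_le x (ℓ a b)) (TT_nrm x (ℓ a b)) (Op_pgroup _ _)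
  have := perm_semireg h.hp f1 f2 f3 (σ := σ) ⟨g, hg, hσ⟩ hca hcb hc
  subst this
  exact (mem_NN_iff_act hl).2 ⟨(TT_le _ _ hg).1, hσ⟩

theorem np : (n = 4 ∧ p = 2) ∨ (n = 5 ∧ p = 3) ∨ (n = 6 ∧ p = 2) := by
  have hn := h.hn
  obtain ⟨x⟩ := h.conn.nonempty
  obtain ⟨ℓ, hl⟩ := h.lab x
  have hab : (⟨0, by omega⟩ : Fin n) ≠ ⟨1, by omega⟩ := by simp [Fin.ext_iff]
  obtain ⟨f1, f2, f3⟩ := h.img_facts hl hab (TT_le (p := p) x _) (TT_nrm x _) (Op_pgroup _ _)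
  refine perm_bound hn h.hp f1 hab f2 f3 ?_
  intro hbot
  apply h.TT_not_le (hl.adj _ _ hab)
  intro g hg
  obtain ⟨σ, hσ⟩ := hl.act g (TT_le _ _ hg).1
  have : σ ∈ img ℓ (TT G p x (ℓ ⟨0, by omega⟩ ⟨1, by omega⟩)) := ⟨g, hg, hσ⟩
  rw [hbot, Subgroup.mem_bot] at this
  subst this
  exact (mem_NN_iff_act hl).2 ⟨(TT_le _ _ hg).1, hσ⟩

/-- A subgroup of `T` that is transitive on the remaining points covers `T` modulo `O`. -/
theorem T_cover {x : V} {ℓ : Fin n → Fin n → V} (hl : IsLab G Γ x ℓ) {a b : Fin n}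
    (hab : a ≠ b) {K : Subgroup G} (hK : K ≤ TT G p x (ℓ a b)) {c : Fin n} (hca : c ≠ a)
    (hcb : c ≠ b) (htr : ∀ c', c' ≠ a → c' ≠ b → c' ≠ c → ∃ g ∈ K, ∃ σ, Act ℓ g σ ∧ σ c = c') :
    TT G p x (ℓ a b) ≤ K ⊔ OO G Γ p x := by
  intro g hg
  obtain ⟨σ, hσ⟩ := hl.act g (TT_le _ _ hg).1
  obtain ⟨sa, sb⟩ := hl.fix hσ hab (TT_le _ _ hg).2
  have hadj := hl.adj a b hab
  by_cases hc : σ c = c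
  · exact Subgroup.mem_sup_right (TT_inf_le hadj ⟨hg, h.T_semireg hl hab hg hσ hca hcb hc⟩)
  · obtain ⟨k, hk, τ, hτ, ht⟩ := htr (σ c) (fun e => hca (σ.injective (e.trans sa.symm)))
      (fun e => hcb (σ.injective (e.trans sb.symm))) hc
    have h1 : k⁻¹ * g ∈ TT G p x (ℓ a b) := Subgroup.mul_mem _ (Subgroup.inv_mem _ (hK hk)) hg
    have h2 : k⁻¹ * g ∈ NN G Γ x := by
      refine h.T_semireg hl hab h1 (hτ.inv.mul hσ) hca hcb ?_
      rw [Equiv.Perm.mul_apply, Equiv.Perm.inv_eq_iff_eq, ht]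
    have h3 := Subgroup.mul_mem_sup hk (TT_inf_le hadj ⟨h1, h2⟩)
    simpa using h3

theorem T_cover_nrm {x y : V} (hxy : Γ.Adj x y) {K : Subgroup G} (hK : K ≤ TT G p x y)
    (hN : Nrm (HH G x y) K) (hK' : ¬ K ≤ NN G Γ x) : TT G p x y ≤ K ⊔ OO G Γ p x := by
  obtain ⟨ℓ, hl⟩ := h.lab x
  obtain ⟨a, b, hab, rfl⟩ := hl.surj y hxy
  obtain ⟨c, hca, hcb, -⟩ := LocPair.exists_avoid h.hn a b a
  apply h.T_cover hl hab hK hca hcb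
  intro c' h1 h2 h3
  obtain ⟨g, hg, σ, hσ, -, -, s⟩ := LocPair.F3 hl hab hca hcb h1 h2 h3.symm (hK.trans (TT_le _ _)) hN hK'
  exact ⟨g, hg, σ, hσ, s⟩

/-- The index of `K ∩ N_x` in a subgroup `K` of `T`. -/
theorem T_index {x : V} {ℓ : Fin n → Fin n → V} (hl : IsLab G Γ x ℓ) {a b : Fin n}
    (hab : a ≠ b) {K : Subgroup G} (hK : K ≤ TT G p x (ℓ a b)) :
    (NN G Γ x).relIndex K ≤ n - 2 ∧ (∃ k, (NN G Γ x).relIndex K = p ^ k) ∧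
    ((NN G Γ x).relIndex K = n - 2 → ∀ c c', c ≠ a → c ≠ b → c' ≠ a → c' ≠ b →
      ∃ g ∈ K, ∃ σ, Act ℓ g σ ∧ σ a = a ∧ σ b = b ∧ σ c = c') := by
  have hadj := hl.adj a b hab
  have orb : ∀ c, c ≠ a → c ≠ b → (NN G Γ x).relIndex K = (orbit K (ℓ a c)).ncard ∧
      orbit K (ℓ a c) ⊆ (fun c => ℓ a c) '' ({a, b}ᶜ : Set (Fin n)) := by
    intro c hca hcb
    constructor
    · rw [← MulAction.index_stabilizer, Subgroup.relIndex]
      congr 1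
      ext ⟨g, hg⟩
      rw [Subgroup.mem_subgroupOf, mem_stabilizer_iff]
      change g ∈ NN G Γ x ↔ g • ℓ a c = ℓ a c
      constructor
      · intro hg'; exact hg'.2 _ (hl.adj a c hca.symm)
      · intro hg'
        have hg1 := hK hg
        obtain ⟨σ, hσ⟩ := hl.act g (TT_le _ _ hg1).1
        exact h.T_semireg hl hab hg1 hσ hca hcb (hl.fix hσ hca.symm hg').2
    · rintro _ ⟨⟨g, hg⟩, rfl⟩
      have hg1 := hK hg
      obtain ⟨σ, hσ⟩ := hl.act g (TT_le _ _ hg1).1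
      obtain ⟨sa, sb⟩ := hl.fix hσ hab (TT_le _ _ hg1).2
      refine ⟨σ c, ?_, ?_⟩
      · simp only [Set.mem_compl_iff, Set.mem_insert_iff, Set.mem_singleton_iff, not_or]
        exact ⟨fun e => hca (σ.injective (e.trans sa.symm)),
          fun e => hcb (σ.injective (e.trans sb.symm))⟩
      · change ℓ a (σ c) = g • ℓ a c
        rw [hσ a c hca.symm, sa]
  have hcard : ((fun c => ℓ a c) '' ({a, b}ᶜ : Set (Fin n))).ncard = n - 2 := by
    rw [Set.ncard_image_of_injOn, Set.ncard_compl, Set.ncard_pair hab, Nat.card_fin]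
    intro c hc c' hc' e
    simp only [Set.mem_compl_iff, Set.mem_insert_iff, Set.mem_singleton_iff, not_or] at hc hc'
    exact (hl.inj _ _ _ _ (Ne.symm hc.1) (Ne.symm hc'.1) e).2
  refine ⟨?_, ?_, ?_⟩
  · obtain ⟨c, hca, hcb, -⟩ := LocPair.exists_avoid h.hn a b a
    rw [(orb c hca hcb).1, ← hcard]
    exact Set.ncard_le_ncard (orb c hca hcb).2
  · have hKp : IsPGroup p K := (Op_pgroup p _).to_le hK
    have := Fact.mk h.hp
    obtain ⟨k, hk⟩ := IsPGroup.iff_card.1 hKp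
    have h1 := (NN G Γ x).relIndex_dvd_card K
    rw [hk, Nat.dvd_prime_pow h.hp] at h1
    obtain ⟨j, -, hj⟩ := h1
    exact ⟨j, hj⟩
  · intro hi c c' hca hcb hca' hcb'
    obtain ⟨o1, o2⟩ := orb c hca hcb
    have o3 := Set.eq_of_subset_of_ncard_le o2 (by rw [hcard, ← hi, o1])
    have : ℓ a c' ∈ orbit K (ℓ a c) := by
      rw [o3]
      exact ⟨c', by simp [hca', hcb'], rfl⟩
    obtain ⟨⟨g, hg⟩, hgc⟩ := this
    have hgc : g • ℓ a c = ℓ a c' := hgc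
    have hg1 := hK hg
    obtain ⟨σ, hσ⟩ := hl.act g (TT_le _ _ hg1).1
    obtain ⟨sa, sb⟩ := hl.fix hσ hab (TT_le _ _ hg1).2
    refine ⟨g, hg, σ, hσ, sa, sb, ?_⟩
    rw [hσ a c hca.symm, sa] at hgc
    exact (hl.inj a _ _ _ (fun e => hca (σ.injective (e.symm.trans sa.symm))) hca'.symm hgc).2

end ACtx

end Abelian

section AbelianTwo

set_option linter.unusedSectionVars false

variable {G V : Type*} [Group G] [Finite G] [MulAction G V] {Γ : SimpleGraph V} {n p : ℕ}

/-- Elements of order dividing `p` in the centre of `T`. -/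
def ZOm (p : ℕ) (T : Subgroup G) : Subgroup G where
  carrier := {z | z ∈ T ∧ (∀ t ∈ T, z * t = t * z) ∧ z ^ p = 1}
  one_mem' := ⟨T.one_mem, by simp, by simp⟩
  mul_mem' := by
    rintro a b ⟨h1, h2, h3⟩ ⟨h4, h5, h6⟩
    refine ⟨T.mul_mem h1 h4, fun t ht => ?_, ?_⟩
    · rw [mul_assoc, h5 t ht, ← mul_assoc, h2 t ht, mul_assoc]
    · have : Commute a b := h2 b h4
      rw [this.mul_pow, h3, h6, one_mul]
  inv_mem' := by
    rintro a ⟨h1, h2, h3⟩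
    refine ⟨T.inv_mem h1, fun t ht => ?_, by rw [inv_pow, h3, inv_one]⟩
    have : Commute a t := h2 t ht
    exact this.inv_left

theorem mem_ZOm {T : Subgroup G} {z : G} :
    z ∈ ZOm p T ↔ z ∈ T ∧ (∀ t ∈ T, z * t = t * z) ∧ z ^ p = 1 := Iff.rfl

theorem ZOm_le (T : Subgroup G) : ZOm p T ≤ T := fun _ h => h.1

theorem ZOm_cen (T : Subgroup G) : Cen T (ZOm p T) := fun t ht _ hz => (hz.2.1 t ht).symm

theorem ZOm_cj (g : G) (T : Subgroup G) : cj g (ZOm p T) = ZOm p (cj g T) := by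
  ext z
  rw [mem_cj, mem_ZOm, mem_ZOm, mem_cj]
  refine and_congr_right fun _ => and_congr ⟨?_, ?_⟩ ?_
  · intro h1 t ht
    rw [mem_cj] at ht
    have := h1 _ ht
    have h2 := congrArg (fun y => g * y * g⁻¹) this
    simpa [mul_assoc] using h2
  · intro h1 t ht
    have := h1 _ (conj_mem_cj ht)
    have h2 := congrArg (fun y => g⁻¹ * y * g) this
    simpa [mul_assoc] using h2
  · have e : (g⁻¹ * z * g) ^ p = g⁻¹ * z ^ p * g := by
      have := conj_pow (a := g⁻¹) (b := z) (i := p)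
      simpa using this
    rw [e]
    constructor
    · intro h1
      have h2 := congrArg (fun y => g * y * g⁻¹) h1
      simpa [mul_assoc] using h2
    · intro h1; rw [h1]; simp

theorem ZOm_ne_bot (hp : p.Prime) {T : Subgroup G} (hT : IsPGroup p T) (hne : T ≠ ⊥) :
    ZOm p T ≠ ⊥ := by
  have := Fact.mk hp
  have hnt : Nontrivial T := (Subgroup.nontrivial_iff_ne_bot T).2 hne
  have h1 := hT.center_nontrivial
  have h2 : IsPGroup p (Subgroup.center T) := hT.to_subgroup _
  obtain ⟨k, hk⟩ := IsPGroup.iff_card.1 h2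
  have hk0 : k ≠ 0 := by
    rintro rfl
    have := Finite.one_lt_card (α := Subgroup.center T)
    rw [hk] at this; simp at this
  obtain ⟨g, hg⟩ := exists_prime_orderOf_dvd_card' (G := Subgroup.center T) p
    (by rw [hk]; exact dvd_pow_self p hk0)
  have hmem : ((g : T) : G) ∈ ZOm p T := by
    refine ⟨(g : T).2, ?_, ?_⟩
    · intro t ht
      have := Subgroup.mem_center_iff.1 g.2 ⟨t, ht⟩
      exact (congrArg Subtype.val this).symm
    · have := pow_orderOf_eq_one g
      rw [hg] at this
      exact_mod_cast congrArg (fun y : Subgroup.center T => ((y : T) : G)) this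
  intro hb
  rw [hb, Subgroup.mem_bot] at hmem
  have h3 : g = 1 := Subtype.ext (Subtype.ext hmem)
  rw [h3, orderOf_one] at hg
  exact hp.one_lt.ne hg

theorem comm_le_of_cover {T Z O : Subgroup G} (hTZ : T ≤ Z ⊔ O) (hZ : Z ≤ T) (hO : O ≤ T)
    (hc : Cen T Z) : ⁅T, T⁆ ≤ ⁅O, O⁆ := by
  have key : ∀ t ∈ T, ∃ z ∈ Z, ∃ o ∈ O, t = z * o := by
    intro t ht
    have h1 := hTZ ht
    have h2 : O ≤ Subgroup.normalizer (Z : Set G) := Nrm_iff_le.1 (hc.mono hO le_rfl).nrm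
    rw [← SetLike.mem_coe, Subgroup.coe_mul_of_right_le_normalizer_left _ _ h2] at h1
    obtain ⟨z, hz, o, ho, e⟩ := Set.mem_mul.1 h1
    exact ⟨z, hz, o, ho, e.symm⟩
  rw [Subgroup.commutator_le]
  intro s hs t ht
  obtain ⟨z, hz, o, ho, rfl⟩ := key s hs
  obtain ⟨w, hw, q, hq, rfl⟩ := key t ht
  have h3 := Subgroup.commutator_mem_commutator ho hq
  rw [commutatorElement_def] at *
  have c1 : o * w = w * o := hc o (hO ho) w hw
  have c2 : Commute z (o * w * q * o⁻¹) :=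
    (hc _ (T.mul_mem (T.mul_mem (T.mul_mem (hO ho) (hZ hw)) (hO hq)) (T.inv_mem (hO ho))) z hz).symm
  have e : z * o * (w * q) * (z * o)⁻¹ * (w * q)⁻¹ = o * q * o⁻¹ * q⁻¹ := by
    have c3 : Commute w (o * q * o⁻¹ * q⁻¹) :=
      (hc _ (T.mul_mem (T.mul_mem (T.mul_mem (hO ho) (hO hq)) (T.inv_mem (hO ho)))
        (T.inv_mem (hO hq))) w hw).symm
    calc z * o * (w * q) * (z * o)⁻¹ * (w * q)⁻¹ = z * (o * w * q * o⁻¹) * z⁻¹ * (q⁻¹ * w⁻¹) := by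
          group
      _ = (o * w) * q * o⁻¹ * (q⁻¹ * w⁻¹) := by rw [c2.eq]; group
      _ = w * (o * q * o⁻¹ * q⁻¹) * w⁻¹ := by rw [c1]; group
      _ = _ := by rw [c3.eq]; group
  rw [e]; exact h3

/-- The group `Z(x,y)`. -/
def ZZ (G : Type*) {V : Type*} [Group G] [MulAction G V] (p : ℕ) (x y : V) :
    Subgroup G := ZOm p (TT G p x y)

theorem ZZ_comm (x y : V) : ZZ G p x y = ZZ G p y x := by rw [ZZ, TT_comm]; rfl

theorem cj_ZZ (g : G) (x y : V) : cj g (ZZ G p x y) = ZZ G p (g • x) (g • y) := by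
  rw [ZZ, ZOm_cj, cj_TT]; rfl

theorem ZZ_nrm (x y : V) : Nrm (HH G x y) (ZZ G p x y) := by
  rw [Nrm_iff_cj]
  intro g hg
  rw [cj_ZZ, hg.1, hg.2]

theorem ZZ_le (x y : V) : ZZ G p x y ≤ HH G x y := (ZOm_le _).trans (TT_le _ _)

namespace ACtx

variable (h : ACtx G Γ n p)
include h

theorem TT_ne_bot {x y : V} (hxy : Γ.Adj x y) : TT G p x y ≠ ⊥ := by
  intro hb
  apply h.TT_not_le hxy
  rw [hb]; exact bot_le

theorem ZZ_ne_bot {x y : V} (hxy : Γ.Adj x y) : ZZ G p x y ≠ ⊥ :=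
  ZOm_ne_bot h.hp (Op_pgroup _ _) (h.TT_ne_bot hxy)

theorem ZZ_le_NN {x y : V} (hxy : Γ.Adj x y) : ZZ G p x y ≤ NN G Γ x := by
  by_contra hcon
  have key : ∀ x y, Γ.Adj x y → ⁅TT G p x y, TT G p x y⁆ = ⁅OO G Γ p x, OO G Γ p x⁆ := by
    intro u v huv
    obtain ⟨g, rfl, rfl⟩ := h.arc_trans hxy huv
    rw [← cj_TT, ← cj_comm, ← h.cj_OO, ← cj_comm]
    congr 1
    apply le_antisymm
    · exact comm_le_of_cover (h.T_cover_nrm hxy (ZOm_le _) (ZZ_nrm x y) hcon) (ZOm_le _)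
        (h.OO_le_TT hxy) (ZOm_cen _)
    · exact Subgroup.commutator_mono (h.OO_le_TT hxy) (h.OO_le_TT hxy)
  have hab : ∀ x y, Γ.Adj x y → Cen (TT G p x y) (TT G p x y) := by
    intro x y hxy
    rw [Cen_iff]
    apply h.CP hxy
    · exact ((Nrm.refl _).comm_le).trans (TT_le _ _)
    · rw [key x y hxy]; exact (h.OO_nrm x).comm (h.OO_nrm x)
    · rw [TT_comm, key y x hxy.symm]; exact (h.OO_nrm y).comm (h.OO_nrm y)
  apply h.hX x y hxy
  rw [eq_bot_iff]
  have : OO G Γ p x ⊓ OO G Γ p y = ⊥ := by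
    apply h.CPG h.hn hxy
    · exact inf_le_left.trans ((h.OO_le_TT hxy).trans (TT_le _ _))
    · exact ((h.OO_nrm x).mono inf_le_left).inf ((h.OO_nrm y).mono inf_le_right)
    · intro u hu
      refine ⟨TT G p x u, TT_le _ _, TT_nrm _ _, h.TT_not_le hu, ?_⟩
      exact ((hab x u hu).mono le_rfl (inf_le_left.trans (h.OO_le_TT hu))).nrm
    · intro u hu
      refine ⟨TT G p y u, TT_le _ _, TT_nrm _ _, h.TT_not_le hu, ?_⟩
      exact ((hab y u hu).mono le_rfl (inf_le_right.trans (h.OO_le_TT hu))).nrm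
  rw [← this]
  exact le_inf (h.XX_le hxy (.inr hxy.symm)) (h.XX_le hxy (.inl hxy))

end ACtx

/-- The group generated by the `Z(x,z)`. -/
def VV (G : Type*) {V : Type*} [Group G] [MulAction G V] (Γ : SimpleGraph V) (p : ℕ) (x : V) :
    Subgroup G := ⨆ z : {z // Γ.Adj x z}, ZZ G p x z

theorem ZZ_le_VV {x y : V} (hxy : Γ.Adj x y) : ZZ G p x y ≤ VV G Γ p x :=
  le_iSup (fun z : {z // Γ.Adj x z} => ZZ G p x z) ⟨y, hxy⟩

namespace ACtx

variable (h : ACtx G Γ n p)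
include h

theorem cj_VV (g : G) (x : V) : cj g (VV G Γ p x) = VV G Γ p (g • x) := by
  have key : ∀ (g : G) (x : V), cj g (VV G Γ p x) ≤ VV G Γ p (g • x) := by
    intro g x
    rw [VV, cj_iSup]
    apply iSup_le
    rintro ⟨z, hz⟩
    rw [cj_ZZ]
    exact ZZ_le_VV (h.adj g _ _ hz)
  apply le_antisymm (key g x)
  have := cj_mono g (key g⁻¹ (g • x))
  rwa [cj_cj_inv, inv_smul_smul] at this

theorem VV_nrm (x : V) : Nrm (St G x) (VV G Γ p x) := by
  rw [Nrm_iff_cj]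
  intro g hg
  rw [h.cj_VV, mem_St.1 hg]

theorem VV_le_OO (x : V) : VV G Γ p x ≤ OO G Γ p x := by
  apply iSup_le
  rintro ⟨z, hz⟩
  exact (le_inf (ZOm_le _) (h.ZZ_le_NN hz)).trans (TT_inf_le hz)

theorem OO_cen_VV (x : V) : Cen (OO G Γ p x) (VV G Γ p x) := by
  apply Cen.iSup
  rintro ⟨z, hz⟩
  exact (ZOm_cen _).mono (h.OO_le_TT hz) le_rfl

theorem VV_cen (x : V) : Cen (VV G Γ p x) (VV G Γ p x) :=
  (h.OO_cen_VV x).mono (h.VV_le_OO x) le_rfl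

theorem VV_le_NN (x : V) : VV G Γ p x ≤ NN G Γ x := (h.VV_le_OO x).trans (OO_le x)

theorem VV_pow (x : V) {g : G} (hg : g ∈ VV G Γ p x) : g ^ p = 1 := by
  have hc := h.VV_cen x
  let K : Subgroup G :=
    { carrier := {g | g ∈ VV G Γ p x ∧ g ^ p = 1}
      one_mem' := ⟨Subgroup.one_mem _, one_pow _⟩
      mul_mem' := by
        rintro a b ⟨ha, ha'⟩ ⟨hb, hb'⟩
        refine ⟨Subgroup.mul_mem _ ha hb, ?_⟩
        have : Commute a b := hc a ha b hb
        rw [this.mul_pow, ha', hb', one_mul]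
      inv_mem' := by
        rintro a ⟨ha, ha'⟩
        exact ⟨Subgroup.inv_mem _ ha, by rw [inv_pow, ha', inv_one]⟩ }
  have : VV G Γ p x ≤ K := by
    apply iSup_le
    rintro ⟨z, hz⟩ k hk
    exact ⟨ZZ_le_VV hz hk, hk.2.2⟩
  exact (this hg).2

theorem VV_ne_bot (x : V) : VV G Γ p x ≠ ⊥ := by
  have hn := h.hn
  obtain ⟨y, hy⟩ := h.exists_adj (by omega) x
  intro hb
  apply h.ZZ_ne_bot hy
  rw [eq_bot_iff, ← hb]
  exact ZZ_le_VV hy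

/-- An element fixing an arc `(x,y)` and centralising `V(x)` acts trivially on `Γ(x)`. -/
theorem star {x y : V} (hxy : Γ.Adj x y) {g : G} (hgx : g • x = x) (hgy : g • y = y)
    (hg : ∀ v ∈ VV G Γ p x, g * v = v * g) : g ∈ NN G Γ x := by
  by_contra hcon
  have hC : Nrm (St G x) (Subgroup.centralizer (VV G Γ p x : Set G)) := by
    intro k hk c hc
    rw [Subgroup.mem_centralizer_iff] at *
    intro v hv
    have h1 := h.VV_nrm x k⁻¹ (Subgroup.inv_mem _ hk) v hv
    have h2 := hc _ h1
    have h3 := congrArg (fun y => k * y * k⁻¹) h2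
    simpa [mul_assoc] using h3
  have hS : St G x ≤ Subgroup.normalizer (ZZ G p x y : Set G) := by
    apply h.GEN h.hn hxy (Nrm_iff_le.1 (ZZ_nrm x y))
    intro u hu
    refine ⟨Subgroup.centralizer (VV G Γ p x : Set G) ⊓ HH G x u, inf_le_right, ?_, ?_, ?_⟩
    · exact (hC.mono inf_le_left).inf (Nrm.refl _)
    · intro hle
      obtain ⟨k, hk, hku⟩ := h.loc_trans hxy hu
      have h1 : k * g * k⁻¹ ∈ Subgroup.centralizer (VV G Γ p x : Set G) ⊓ HH G x u := by
        refine ⟨hC k hk g ?_, ?_⟩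
        · rw [Subgroup.mem_centralizer_iff]
          intro v hv
          exact (hg v hv).symm
        · rw [← hk, ← hku, ← cj_HH]
          exact conj_mem_cj ⟨hgx, hgy⟩
      have h2 := hle h1
      rw [← hk, ← h.cj_NN, mem_cj] at h2
      apply hcon
      simpa [mul_assoc] using h2
    · rw [← Nrm_iff_le]
      apply Cen.nrm
      intro c hc z hz
      exact (Subgroup.mem_centralizer_iff.1 hc.1 z (ZZ_le_VV hxy hz)).symm
  rw [← Nrm_iff_le] at hS
  apply h.ZZ_ne_bot hxy
  apply h.CP hxy (ZZ_le x y) hS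
  obtain ⟨t, t1, t2⟩ := h.arc_trans hxy hxy.symm
  have := hS.cj t
  rwa [cj_St, cj_ZZ, t1, t2, ZZ_comm] at this

end ACtx

end AbelianTwo

section AbelianThree

set_option linter.unusedSectionVars false

variable {G V : Type*} [Group G] [Finite G] [MulAction G V] {Γ : SimpleGraph V} {n p : ℕ}

theorem LocPair.dist_smul (h : LocPair G Γ n) (g : G) (u v : V) :
    Γ.dist (g • u) (g • v) = Γ.dist u v := by
  have key : ∀ (g : G) (u v : V), Γ.dist (g • u) (g • v) ≤ Γ.dist u v := by
    intro g u v
    obtain ⟨w, hw⟩ := h.conn.exists_walk_length_eq_dist u v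
    let f : Γ →g Γ := ⟨fun v => g • v, fun {a b} hab => h.adj g a b hab⟩
    rw [← hw, ← SimpleGraph.Walk.length_map f w]
    exact SimpleGraph.dist_le _
  apply le_antisymm (key g u v)
  simpa using key g⁻¹ (g • u) (g • v)

theorem dist_pred (hc : Γ.Connected) {u v : V} {k : ℕ} (hk : Γ.dist u v = k + 1) :
    ∃ v1, Γ.Adj v v1 ∧ Γ.dist u v1 = k := by
  obtain ⟨w, hw⟩ := hc.exists_walk_length_eq_dist v u
  rw [SimpleGraph.dist_comm, hk] at hw
  cases w with
  | nil => simp at hw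
  | @cons _ v1 _ hadj w =>
    rw [SimpleGraph.Walk.length_cons] at hw
    refine ⟨v1, hadj, ?_⟩
    have h1 : Γ.dist v1 u ≤ w.length := SimpleGraph.dist_le w
    have h2 : Γ.dist u v ≤ Γ.dist u v1 + Γ.dist v1 v := hc.dist_triangle
    have h3 : Γ.dist v1 v = 1 := SimpleGraph.dist_eq_one_iff_adj.2 hadj.symm
    rw [SimpleGraph.dist_comm] at h1
    omega

theorem dist_adj_le (hc : Γ.Connected) {u v v1 : V} (ha : Γ.Adj v v1) :
    Γ.dist u v1 ≤ Γ.dist u v + 1 := by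
  have h2 : Γ.dist u v1 ≤ Γ.dist u v + Γ.dist v v1 := hc.dist_triangle
  rwa [SimpleGraph.dist_eq_one_iff_adj.2 ha] at h2

/-- The setting with the parameter `b`. -/
structure BCtx (G : Type*) {V : Type*} [Group G] [MulAction G V] (Γ : SimpleGraph V) (n p b : ℕ) :
    Prop extends ACtx G Γ n p where
  bmin : ∀ u v, Γ.dist u v < b → VV G Γ p u ≤ NN G Γ v
  bex : ∃ u v, Γ.dist u v = b ∧ ¬ VV G Γ p u ≤ NN G Γ v

theorem ACtx.exists_BCtx (h : ACtx G Γ n p) : ∃ b, BCtx G Γ n p b := by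
  classical
  have hex : ∃ b, ∃ u v, Γ.dist u v = b ∧ ¬ VV G Γ p u ≤ NN G Γ v := by
    by_contra! hcon
    obtain ⟨x⟩ := h.conn.nonempty
    apply h.VV_ne_bot x
    rw [eq_bot_iff]
    intro g hg
    rw [Subgroup.mem_bot]
    exact h.faithful g fun v => (hcon _ x v rfl hg).1
  refine ⟨Nat.find hex, ⟨h, ?_, Nat.find_spec hex⟩⟩
  intro u v huv
  by_contra hcon
  exact Nat.find_min hex huv ⟨u, v, rfl, hcon⟩

namespace ACtx

variable (h : ACtx G Γ n p)
include h

/-- If `V(u) ≤ T(v,v₁)` then `V(u) ≤ N(v)` iff they commute. -/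
theorem le_OO_of_TT {K : Subgroup G} {v v1 : V} (ha : Γ.Adj v v1) (hK : K ≤ TT G p v v1)
    (hN : K ≤ NN G Γ v) : K ≤ OO G Γ p v := (le_inf hK hN).trans (TT_inf_le ha)

theorem cen_iff {K : Subgroup G} {v v1 : V} (ha : Γ.Adj v v1) (hK : K ≤ TT G p v v1) :
    Cen K (VV G Γ p v) ↔ K ≤ NN G Γ v := by
  constructor
  · intro hc g hg
    exact h.star ha (TT_le _ _ (hK hg)).1 (TT_le _ _ (hK hg)).2 (hc g hg)
  · intro hN
    exact (h.OO_cen_VV v).mono (h.le_OO_of_TT ha hK hN) le_rfl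

end ACtx

namespace BCtx

variable {b : ℕ} (h : BCtx G Γ n p b)
include h

theorem bpos : 1 ≤ b := by
  rcases Nat.eq_zero_or_pos b with rfl | h1
  · exfalso
    obtain ⟨u, v, h1, h2⟩ := h.bex
    rw [h.conn.dist_eq_zero_iff] at h1
    subst h1
    exact h2 (h.VV_le_NN u)
  · exact h1

theorem VV_le_OO_lt : ∀ (k : ℕ) (u v : V), Γ.dist u v = k → k < b → VV G Γ p u ≤ OO G Γ p v := by
  intro k
  induction k with
  | zero =>
    intro u v h1 _
    rw [h.conn.dist_eq_zero_iff] at h1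
    subst h1
    exact h.VV_le_OO u
  | succ k ih =>
    intro u v h1 h2
    obtain ⟨v1, ha, hd⟩ := dist_pred h.conn h1
    have h3 := ih u v1 hd (by omega)
    exact h.le_OO_of_TT ha (h3.trans (h.OO_le_TT' ha)) (h.bmin u v (by omega))

theorem VV_le_OO' {u v : V} (hd : Γ.dist u v < b) : VV G Γ p u ≤ OO G Γ p v :=
  h.VV_le_OO_lt _ u v rfl hd

theorem VV_le_TT {u v v1 : V} (ha : Γ.Adj v v1) (hd : Γ.dist u v1 < b) :
    VV G Γ p u ≤ TT G p v v1 := (h.VV_le_OO' hd).trans (h.OO_le_TT' ha)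

theorem cen_lt {u v : V} (hd : Γ.dist u v < b) : Cen (VV G Γ p u) (VV G Γ p v) :=
  (h.OO_cen_VV v).mono (h.VV_le_OO' hd) le_rfl

/-- For a vertex at distance at most `b` there is a suitable neighbour. -/
theorem exists_near {u v : V} (hd : Γ.dist u v ≤ b) (hne : u ≠ v) :
    ∃ v1, Γ.Adj v v1 ∧ Γ.dist u v1 < b := by
  have : Γ.dist u v ≠ 0 := by rwa [Ne, h.conn.dist_eq_zero_iff]
  obtain ⟨v1, ha, h1⟩ := dist_pred h.conn (u := u) (v := v) (k := Γ.dist u v - 1) (by omega)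
  exact ⟨v1, ha, by omega⟩

theorem ne_of_not_cen {u v : V} (hc : ¬ Cen (VV G Γ p u) (VV G Γ p v)) : u ≠ v := by
  rintro rfl
  exact hc (h.VV_cen u)

theorem cen_le {u v : V} (hd : Γ.dist u v ≤ b) :
    Cen (VV G Γ p u) (VV G Γ p v) ↔ VV G Γ p u ≤ NN G Γ v := by
  by_cases hne : u = v
  · subst hne; exact ⟨fun _ => h.VV_le_NN u, fun _ => h.VV_cen u⟩
  · obtain ⟨v1, ha, h1⟩ := h.exists_near hd hne
    exact h.cen_iff ha (h.VV_le_TT ha h1)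

/-- `V(u)` normalises `V(v)` when the distance is at most `b`. -/
theorem VV_nrm_VV {u v : V} (hd : Γ.dist u v ≤ b) : Nrm (VV G Γ p u) (VV G Γ p v) := by
  by_cases hne : u = v
  · subst hne; exact Nrm.refl _
  · obtain ⟨v1, ha, h1⟩ := h.exists_near hd hne
    exact (h.VV_nrm v).mono ((h.VV_le_TT ha h1).trans ((TT_le _ _).trans inf_le_left))

theorem b_ne_one : b ≠ 1 := by
  rintro rfl
  have hV : ∀ x y, Γ.Adj x y → ¬ VV G Γ p x ≤ NN G Γ y := by
    obtain ⟨u, v, h1, h2⟩ := h.bex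
    rw [SimpleGraph.dist_eq_one_iff_adj] at h1
    intro x y hxy hle
    obtain ⟨g, rfl, rfl⟩ := h.arc_trans h1 hxy
    rw [← h.cj_VV, ← h.cj_NN, cj_le_cj] at hle
    exact h2 hle
  have key : ∀ x y, Γ.Adj x y → ⁅OO G Γ p x, OO G Γ p x⁆ =
      ⁅OO G Γ p x ⊓ OO G Γ p y, OO G Γ p x ⊓ OO G Γ p y⁆ := by
    intro x y hxy
    apply le_antisymm
    · refine comm_le_of_cover ?_ (h.VV_le_OO x) inf_le_left (h.OO_cen_VV x)
      intro g hg
      have hT : TT G p y x ≤ VV G Γ p x ⊔ OO G Γ p y :=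
        h.T_cover_nrm hxy.symm ((h.VV_le_OO x).trans (h.OO_le_TT' hxy.symm))
          ((h.VV_nrm x).mono inf_le_right) (hV x y hxy)
      have h1 := hT (h.OO_le_TT' hxy.symm hg)
      have h2 : OO G Γ p y ≤ Subgroup.normalizer (VV G Γ p x : Set G) := by
        rw [← Nrm_iff_le]
        refine (h.VV_nrm x).mono ((h.OO_le_TT' hxy).trans ((TT_le _ _).trans inf_le_left))
      rw [← SetLike.mem_coe, Subgroup.coe_mul_of_right_le_normalizer_left _ _ h2] at h1
      obtain ⟨z, hz, o, ho, rfl⟩ := Set.mem_mul.1 h1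
      refine Subgroup.mul_mem_sup hz ⟨?_, ho⟩
      have := Subgroup.mul_mem _ (Subgroup.inv_mem _ (h.VV_le_OO x hz)) hg
      simpa using this
    · exact Subgroup.commutator_mono inf_le_left inf_le_left
  have hab : ∀ x, Cen (OO G Γ p x) (OO G Γ p x) := by
    intro x
    have hn := h.hn
    obtain ⟨y, hxy⟩ := h.exists_adj (by omega) x
    rw [Cen_iff]
    apply h.CP hxy
    · exact ((Nrm.refl _).comm_le).trans ((h.OO_le_TT hxy).trans (TT_le _ _))
    · exact (h.OO_nrm x).comm (h.OO_nrm x)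
    · rw [key x y hxy, inf_comm, ← key y x hxy.symm]
      exact (h.OO_nrm y).comm (h.OO_nrm y)
  obtain ⟨x, y, h1, -⟩ := h.bex
  rw [SimpleGraph.dist_eq_one_iff_adj] at h1
  apply h.hX x y h1
  apply h.CPG h.hn h1
  · exact (h.XX_le h1 (.inl h1)).trans ((h.OO_le_TT' h1).trans (TT_le _ _))
  · exact (h.PP_nrm x y).Op p
  · intro u hu
    refine ⟨OO G Γ p u, (h.OO_le_TT' hu).trans (TT_le _ _), (h.OO_nrm u).mono inf_le_right, ?_, ?_⟩
    · intro hle; exact hV u x hu.symm ((h.VV_le_OO u).trans hle)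
    · exact ((hab u).mono le_rfl (h.XX_le h1 (.inl hu))).nrm
  · intro u hu
    refine ⟨OO G Γ p u, (h.OO_le_TT' hu).trans (TT_le _ _), (h.OO_nrm u).mono inf_le_right, ?_, ?_⟩
    · intro hle; exact hV u y hu.symm ((h.VV_le_OO u).trans hle)
    · exact ((hab u).mono le_rfl (h.XX_le h1 (.inr hu))).nrm

end BCtx

end AbelianThree

section AbelianFour

set_option linter.unusedSectionVars false

variable {G V : Type*} [Group G] [Finite G] [MulAction G V] {Γ : SimpleGraph V} {n p : ℕ}

theorem card_modEq_centralizer {W : Subgroup G} {q k : ℕ} (hq : q.Prime) {γ : G}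
    (hγ : γ ∈ Subgroup.normalizer (W : Set G)) (hk : γ ^ q ^ k = 1) :
    Nat.card W ≡ Nat.card (Subgroup.centralizer {γ} ⊓ W : Subgroup G) [MOD q] := by
  have := Fact.mk hq
  let γ' : (Subgroup.normalizer (W : Set G)) := ⟨γ, hγ⟩
  have hγ' : γ' ^ q ^ k = 1 := Subtype.ext hk
  have hP : IsPGroup q (Subgroup.zpowers γ') := by
    rintro ⟨_, m, rfl⟩
    refine ⟨k, Subtype.ext ?_⟩
    change (γ' ^ m) ^ q ^ k = 1
    rw [← zpow_natCast, zpow_comm, zpow_natCast, hγ', one_zpow]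
  have h1 := hP.card_modEq_card_fixedPoints W
  have h2 : Nat.card (fixedPoints (Subgroup.zpowers γ') W) =
      Nat.card (Subgroup.centralizer {γ} ⊓ W : Subgroup G) := by
    apply Nat.card_congr
    refine ⟨fun w => ⟨(w : W), ?_, (w : W).2⟩, fun w => ⟨⟨w, w.2.2⟩, ?_⟩, fun w => rfl, fun w => rfl⟩
    · have h3 := w.2 ⟨γ', Subgroup.mem_zpowers γ'⟩
      have h4 : γ * ((w : W) : G) * γ⁻¹ = ((w : W) : G) := congrArg Subtype.val h3
      exact Subgroup.mem_centralizer_singleton_iff.2 (mul_inv_eq_iff_eq_mul.1 h4).symm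
    · have hst : Subgroup.zpowers γ' ≤ stabilizer _ (⟨(w : G), w.2.2⟩ : W) := by
        rw [Subgroup.zpowers_le, mem_stabilizer_iff]
        apply Subtype.ext
        have h3 := Subgroup.mem_centralizer_singleton_iff.1 w.2.1
        change γ * (w : G) * γ⁻¹ = w
        rw [← h3]; simp
      rintro ⟨g, hg⟩
      exact hst hg
  rwa [h2] at h1

theorem relIndex_mul_card' (C W : Subgroup G) :
    C.relIndex W * Nat.card (C ⊓ W : Subgroup G) = Nat.card W := by
  have := Subgroup.relIndex_mul_relIndex (⊥ : Subgroup G) (C ⊓ W) W bot_le inf_le_right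
  rw [Subgroup.relIndex_bot_left, Subgroup.relIndex_bot_left, Subgroup.inf_relIndex_right] at this
  rw [mul_comm]; exact this

theorem num49 {i : ℕ} (hi : i ∣ 4 ∨ i ∣ 9) : i = 1 ∨ i = 2 ∨ i = 4 ∨ i = 3 ∨ i = 9 := by
  rcases hi with h6 | h6
  · have := Nat.le_of_dvd (by norm_num) h6
    interval_cases i <;> omega
  · have := Nat.le_of_dvd (by norm_num) h6
    interval_cases i <;> omega

theorem Act.iter5 {σ : Equiv.Perm (Fin n)} {p1 p2 p3 p4 p5 : Fin n} (h1 : σ p1 = p2) (h2 : σ p2 = p3)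
    (h3 : σ p3 = p4) (h4 : σ p4 = p5) (h5 : σ p5 = p1) {M : ℕ} (hM : M % 5 = 1) :
    (σ ^ M) p1 = p2 := by
  have h0 : (σ ^ 5) p1 = p1 := by
    simp only [pow_succ, pow_zero, one_mul, Equiv.Perm.mul_apply, h1, h2, h3, h4, h5]
  have h6 : ∀ q, ((σ ^ 5) ^ q) p1 = p1 := by
    intro q
    induction q with
    | zero => simp
    | succ q ih => rw [pow_succ, Equiv.Perm.mul_apply, h0, ih]
  rw [← Nat.div_add_mod M 5, hM, add_comm, pow_add, pow_mul, pow_one, Equiv.Perm.mul_apply, h6, h1]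

namespace ACtx

variable (h : ACtx G Γ n p)
include h

theorem five {z : V} {ℓ : Fin n → Fin n → V} (hl : IsLab G Γ z ℓ) {γ : G} (hγ : γ • z = z)
    {σ : Equiv.Perm (Fin n)} (hσ : Act ℓ γ σ) {p1 p2 p3 p4 p5 : Fin n}
    (h12 : p1 ≠ p2) (h13 : p1 ≠ p3) (h14 : p1 ≠ p4) (h15 : p1 ≠ p5) (h24 : p2 ≠ p4)
    (h25 : p2 ≠ p5) (h23 : p2 ≠ p3) (h45 : p4 ≠ p5)
    (h1 : σ p1 = p2) (h2 : σ p2 = p3)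
    (h3 : σ p3 = p4) (h4 : σ p4 = p5) (h5 : σ p5 = p1)
    (hi : (Subgroup.centralizer {γ}).relIndex (VV G Γ p z) ∣ 4 ∨
      (Subgroup.centralizer {γ}).relIndex (VV G Γ p z) ∣ 9) : False := by
  have hn := h.hn
  -- a power of `5`-power order
  obtain ⟨k, N, hN, hord⟩ := Nat.exists_eq_pow_mul_and_not_dvd (orderOf_pos γ).ne' 5 (by norm_num)
  have hco : Nat.Coprime 5 N := (Nat.Prime.coprime_iff_not_dvd (by norm_num)).2 hN
  obtain ⟨M, hM5, hMN⟩ := Nat.chineseRemainder hco 1 0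
  have hM5 : M % 5 = 1 := hM5
  have hMN : N ∣ M := (Nat.modEq_zero_iff_dvd).1 hMN
  set δ := γ ^ M with hδ
  set ρ := σ ^ M with hρ
  have hδz : δ • z = z := (St G z).pow_mem hγ M
  have hδρ : Act ℓ δ ρ := hσ.pow M
  have hδ1 : δ ^ 5 ^ k = 1 := by
    rw [hδ, ← pow_mul, ← orderOf_dvd_iff_pow_eq_one, hord, mul_comm]
    exact Nat.mul_dvd_mul_right hMN _
  have r1 : ρ p1 = p2 := Act.iter5 h1 h2 h3 h4 h5 hM5
  have r2 : ρ p2 = p3 := Act.iter5 h2 h3 h4 h5 h1 hM5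
  have r3 : ρ p3 = p4 := Act.iter5 h3 h4 h5 h1 h2 hM5
  have r4 : ρ p4 = p5 := Act.iter5 h4 h5 h1 h2 h3 hM5
  -- `δ` centralises `V(z)`
  have hle : Subgroup.centralizer {γ} ≤ Subgroup.centralizer {δ} := by
    intro c hc
    rw [Subgroup.mem_centralizer_singleton_iff] at *
    have : Commute c γ := hc
    exact (this.pow_right M).eq
  have hdvd := Subgroup.relIndex_dvd_of_le_left (VV G Γ p z) hle
  have hmod := card_modEq_centralizer (W := VV G Γ p z) (q := 5) (k := k) (by norm_num) (γ := δ)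
    (Nrm_iff_le.1 (h.VV_nrm z) hδz) hδ1
  have hcen : (Subgroup.centralizer {δ}).relIndex (VV G Γ p z) = 1 := by
    have e := relIndex_mul_card' (Subgroup.centralizer {δ}) (VV G Γ p z)
    set i := (Subgroup.centralizer {δ}).relIndex (VV G Γ p z) with hi'
    set f := Nat.card (Subgroup.centralizer {δ} ⊓ VV G Γ p z : Subgroup G) with hf
    have hf5 : f % 5 ≠ 0 := by
      intro h0
      have := Fact.mk h.hp
      have hpg : IsPGroup p (Subgroup.centralizer {δ} ⊓ VV G Γ p z : Subgroup G) :=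
        (Op_pgroup p (NN G Γ z)).to_le (inf_le_right.trans (h.VV_le_OO z))
      obtain ⟨j, hj⟩ := IsPGroup.iff_card.1 hpg
      rw [← hf] at hj
      have h6 : 5 ∣ p ^ j := hj ▸ Nat.dvd_of_mod_eq_zero h0
      have h7 := (Nat.prime_dvd_prime_iff_eq (by norm_num) h.hp).1
        (Nat.Prime.dvd_of_dvd_pow (by norm_num) h6)
      rcases h.np with h8 | h8 | h8 <;> omega
    rw [← e] at hmod
    have hi2 : i ∣ 4 ∨ i ∣ 9 := hi.imp hdvd.trans hdvd.trans
    have hi3 := num49 hi2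
    have hmod : i * f % 5 = f % 5 := hmod
    rcases hi3 with h6 | h6 | h6 | h6 | h6
    · exact h6
    all_goals (rw [h6] at hmod; omega)
  rw [Subgroup.relIndex_eq_one] at hcen
  have hcen' : ∀ v ∈ VV G Γ p z, δ * v = v * δ := fun v hv =>
    (Subgroup.mem_centralizer_singleton_iff.1 (hcen hv)).symm
  -- the commutator
  obtain ⟨t, htz, ht⟩ := hl.real (Equiv.swap p1 p2)
  have hs := h.star (x := z) (y := ℓ p4 p5) (hl.adj _ _ h45) (g := δ * t * δ⁻¹ * t⁻¹)
    (by
      change _ ∈ St G z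
      exact Subgroup.mul_mem _ (Subgroup.mul_mem _ (Subgroup.mul_mem _ hδz htz)
        (Subgroup.inv_mem _ hδz)) (Subgroup.inv_mem _ htz))
    (by
      have hA := ((hδρ.mul ht).mul hδρ.inv).mul ht.inv
      rw [hA _ _ h45]
      have e1 : ρ⁻¹ p4 = p3 := by rw [Equiv.Perm.inv_eq_iff_eq, r3]
      have e2 : ρ⁻¹ p5 = p4 := by rw [Equiv.Perm.inv_eq_iff_eq, r4]
      simp only [Equiv.Perm.mul_apply, Equiv.swap_inv]
      rw [Equiv.swap_apply_of_ne_of_ne h14.symm h24.symm,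
        Equiv.swap_apply_of_ne_of_ne h15.symm h25.symm, e1, e2,
        Equiv.swap_apply_of_ne_of_ne h13.symm h23.symm,
        Equiv.swap_apply_of_ne_of_ne h14.symm h24.symm, r3, r4])
    (by
      intro v hv
      have h6 := h.VV_nrm z t⁻¹ (Subgroup.inv_mem _ htz) v hv
      have h7 : δ⁻¹ * (t⁻¹ * v * t⁻¹⁻¹) = (t⁻¹ * v * t⁻¹⁻¹) * δ⁻¹ :=
        (Commute.inv_left (hcen' _ h6 : Commute _ _)).eq
      have h8 := hcen' _ hv
      calc δ * t * δ⁻¹ * t⁻¹ * v = δ * t * (δ⁻¹ * (t⁻¹ * v * t⁻¹⁻¹)) * t⁻¹ := by group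
        _ = δ * v * (t * δ⁻¹ * t⁻¹) := by rw [h7]; group
        _ = v * (δ * t * δ⁻¹ * t⁻¹) := by rw [h8]; group)
  have hA := ((hδρ.mul ht).mul hδρ.inv).mul ht.inv
  have h6 := hl.unique (by omega) hA ((mem_NN_iff_act hl).1 hs).2
  have h7 := congrArg (fun s : Equiv.Perm (Fin n) => s p1) h6
  have e1 : ρ⁻¹ p2 = p1 := by rw [Equiv.Perm.inv_eq_iff_eq, r1]
  simp only [Equiv.Perm.mul_apply, Equiv.swap_inv, Equiv.swap_apply_left, e1, r2,
    Equiv.Perm.one_apply] at h7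
  exact h13 h7.symm

theorem idx_conj {z : V} {g k : G} (hk : k • z = z) :
    (Subgroup.centralizer {k * g * k⁻¹}).relIndex (VV G Γ p z) =
      (Subgroup.centralizer {g}).relIndex (VV G Γ p z) := by
  have h1 : cj k (VV G Γ p z) = VV G Γ p z := (h.VV_nrm z).cj_eq hk
  have h2 : cj k (Subgroup.centralizer {g}) = Subgroup.centralizer {k * g * k⁻¹} := by
    ext c
    rw [mem_cj, Subgroup.mem_centralizer_singleton_iff, Subgroup.mem_centralizer_singleton_iff]
    constructor
    · intro e
      have := congrArg (fun y => k * y * k⁻¹) e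
      simpa [mul_assoc] using this
    · intro e
      have := congrArg (fun y => k⁻¹ * y * k) e
      simpa [mul_assoc] using this
  conv_lhs => rw [← h1, ← h2]
  exact Subgroup.relIndex_map_map_of_injective _ _ (MulAut.conj k).injective

theorem idx_pow (C : Subgroup G) (z : V) : ∃ j, C.relIndex (VV G Γ p z) = p ^ j := by
  have := Fact.mk h.hp
  have hKp : IsPGroup p (VV G Γ p z) := (Op_pgroup p _).to_le (h.VV_le_OO z)
  obtain ⟨k, hk⟩ := IsPGroup.iff_card.1 hKp
  have h1 := C.relIndex_dvd_card (VV G Γ p z)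
  rw [hk, Nat.dvd_prime_pow h.hp] at h1
  obtain ⟨j, -, hj⟩ := h1
  exact ⟨j, hj⟩

theorem idx_mul {z : V} {g k : G} (hk : k • z = z)
    (hi : (Subgroup.centralizer {g}).relIndex (VV G Γ p z) = p) :
    (Subgroup.centralizer {g * (k * g * k⁻¹)}).relIndex (VV G Γ p z) ∣ p ^ 2 := by
  have hle : Subgroup.centralizer {g} ⊓ Subgroup.centralizer {k * g * k⁻¹} ≤
      Subgroup.centralizer {g * (k * g * k⁻¹)} := by
    rintro c ⟨h1, h2⟩
    have h1 := Subgroup.mem_centralizer_singleton_iff.1 h1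
    have h2 := Subgroup.mem_centralizer_singleton_iff.1 h2
    rw [Subgroup.mem_centralizer_singleton_iff]
    exact (Commute.mul_right (h1 : Commute _ _) (h2 : Commute _ _)).eq
  have h1 := Subgroup.relIndex_inf_le (H := Subgroup.centralizer {g})
    (K := Subgroup.centralizer {k * g * k⁻¹}) (L := VV G Γ p z)
  rw [h.idx_conj hk, hi, ← sq] at h1
  refine (Subgroup.relIndex_dvd_of_le_left (VV G Γ p z) hle).trans ?_
  obtain ⟨j, hj⟩ := h.idx_pow (Subgroup.centralizer {g} ⊓ Subgroup.centralizer {k * g * k⁻¹}) z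
  rw [hj] at h1 ⊢
  exact pow_dvd_pow _ ((Nat.pow_le_pow_iff_right h.hp.one_lt).1 h1)

theorem IDX {z y : V} (hzy : Γ.Adj z y) {g : G} (hg : g ∈ TT G p z y) (hg' : g ∉ NN G Γ z) :
    (Subgroup.centralizer {g}).relIndex (VV G Γ p z) ≠ 1 ∧
    (5 ≤ n → (Subgroup.centralizer {g}).relIndex (VV G Γ p z) ≠ p) := by
  constructor
  · intro hi
    rw [Subgroup.relIndex_eq_one] at hi
    exact hg' (h.star hzy (TT_le _ _ hg).1 (TT_le _ _ hg).2 fun v hv =>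
      (Subgroup.mem_centralizer_singleton_iff.1 (hi hv)).symm)
  intro hn5 hi
  obtain ⟨ℓ, hl⟩ := h.lab z
  obtain ⟨a, b, hab, rfl⟩ := hl.surj y hzy
  obtain ⟨σ, hσ⟩ := hl.act g (TT_le _ _ hg).1
  obtain ⟨sa, sb⟩ := hl.fix hσ hab (TT_le _ _ hg).2
  have fp : ∀ c, c ≠ a → c ≠ b → σ c ≠ c := fun c h1 h2 h3 =>
    hg' (h.T_semireg hl hab hg hσ h1 h2 h3)
  have na : ∀ c, c ≠ a → σ c ≠ a := fun c h1 h2 => h1 (σ.injective (h2.trans sa.symm))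
  have nb : ∀ c, c ≠ b → σ c ≠ b := fun c h1 h2 => h1 (σ.injective (h2.trans sb.symm))
  obtain ⟨c, hca, hcb, -⟩ := LocPair.exists_avoid h.hn a b a
  obtain ⟨d, hd⟩ : ∃ d, σ c = d := ⟨_, rfl⟩
  have hdc : d ≠ c := hd ▸ fp c hca hcb
  have hda : d ≠ a := hd ▸ na c hca
  have hdb : d ≠ b := hd ▸ nb c hcb
  have hdvd := fun {k : G} (hk : k • z = z) => h.idx_mul hk hi
  rcases h.np with ⟨h1, h2⟩ | ⟨h1, h2⟩ | ⟨h1, h2⟩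
  · omega
  · obtain ⟨e, he⟩ := exists_notMem ({a, b, c, d} : Finset (Fin n))
      (lt_of_le_of_lt Finset.card_le_four (by omega))
    simp only [Finset.mem_insert, Finset.mem_singleton, not_or] at he
    obtain ⟨hea, heb, hec, hed⟩ := he
    have all : ∀ t, t = a ∨ t = b ∨ t = c ∨ t = d ∨ t = e := by
      intro t
      by_contra! hcon
      have h3 : ({t, a, b, c, d, e} : Finset (Fin n)).card = 6 := by
        simp [*, Ne.symm]
      have h4 := Finset.card_le_univ ({t, a, b, c, d, e} : Finset (Fin n))
      rw [Fintype.card_fin] at h4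
      omega
    have inj := σ.injective
    have hed' : σ d = e := by
      have h3 := fp e hea heb
      have h4 := na e hea
      have h5 := nb e heb
      have h6 := fp d hda hdb
      have h7 := na d hda
      have h8 := nb d hdb
      have h9 : σ e ≠ σ d := fun q => hed (inj q)
      have h10 : σ e ≠ σ c := fun q => hec (inj q)
      rcases all (σ d) with q | q | q | q | q <;> rcases all (σ e) with q' | q' | q' | q' | q' <;>
        simp_all
    have hee : σ e = c := by
      have h3 := fp e hea heb
      have h4 := na e hea
      have h5 := nb e heb
      have h9 : σ e ≠ σ d := fun q => hed (inj q)
      have h10 : σ e ≠ σ c := fun q => hec (inj q)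
      rcases all (σ e) with q' | q' | q' | q' | q' <;> simp_all
    obtain ⟨τ, t1, t2, t3⟩ := perm3 hdc.symm (Ne.symm hec) (Ne.symm hed) hea heb hab
    obtain ⟨k, hk, hτ⟩ := hl.real τ
    have hA := hσ.mul ((hτ.mul hσ).mul hτ.inv)
    have u1 : τ⁻¹ e = c := by rw [Equiv.Perm.inv_eq_iff_eq, t1]
    have u2 : τ⁻¹ a = d := by rw [Equiv.Perm.inv_eq_iff_eq, t2]
    have u3 : τ⁻¹ b = e := by rw [Equiv.Perm.inv_eq_iff_eq, t3]
    have u4 : ∀ s, s ≠ e → s ≠ a → s ≠ b → τ (σ (τ⁻¹ s)) = s := by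
      intro s s1 s2 s3
      obtain ⟨r, rfl⟩ : ∃ r, s = τ r := ⟨τ⁻¹ s, by simp⟩
      have e1 : τ⁻¹ (τ r) = r := by simp
      rw [e1]
      rcases all r with q | q | q | q | q
      · rw [q, sa]
      · rw [q, sb]
      · exact absurd (q ▸ t1) s1
      · exact absurd (q ▸ t2) s2
      · exact absurd (q ▸ t3) s3
    refine h.five hl (γ := g * (k * g * k⁻¹)) ?_ hA (p1 := a) (p2 := b) (p3 := c) (p4 := d) (p5 := e)
      hab hca.symm hda.symm (Ne.symm hea) hdb.symm (Ne.symm heb) hcb.symm (Ne.symm hed)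
      ?_ ?_ ?_ ?_ ?_ (.inr (by simpa [h2] using hdvd hk))
    · change _ ∈ St G z
      have hgz : g ∈ St G z := (TT_le _ _ hg).1
      exact Subgroup.mul_mem _ hgz (Subgroup.mul_mem _ (Subgroup.mul_mem _ hk hgz)
        (Subgroup.inv_mem _ hk))
    · simp only [Equiv.Perm.mul_apply]; rw [u2, hed', t3, sb]
    · simp only [Equiv.Perm.mul_apply]; rw [u3, hee, t1, hee]
    · simp only [Equiv.Perm.mul_apply]; rw [u4 c (Ne.symm hec) hca hcb, hd]
    · simp only [Equiv.Perm.mul_apply]; rw [u4 d (Ne.symm hed) hda hdb, hed']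
    · simp only [Equiv.Perm.mul_apply]; rw [u1, hd, t2, sa]
  · have inv2 : ∀ c, c ≠ a → c ≠ b → σ (σ c) = c := by
      intro c hca hcb
      obtain ⟨d, hd⟩ : ∃ d, σ c = d := ⟨_, rfl⟩
      have hdc : d ≠ c := hd ▸ fp c hca hcb
      have hda : d ≠ a := hd ▸ na c hca
      have hdb : d ≠ b := hd ▸ nb c hcb
      rw [hd]
      by_contra hec
      obtain ⟨e, he⟩ : ∃ e, σ d = e := ⟨_, rfl⟩
      have hed : e ≠ d := he ▸ fp d hda hdb
      have hea : e ≠ a := he ▸ na d hda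
      have heb : e ≠ b := he ▸ nb d hdb
      rw [he] at hec
      obtain ⟨f, hf⟩ := exists_notMem ({a, b, c, d, e} : Finset (Fin n))
        (lt_of_le_of_lt Finset.card_le_five (by omega))
      simp only [Finset.mem_insert, Finset.mem_singleton, not_or] at hf
      obtain ⟨hfa, hfb, hfc, hfd, hfe⟩ := hf
      obtain ⟨k, hk, hτ⟩ := hl.real (Equiv.swap e f)
      have hA := hσ.inv.mul ((hτ.mul hσ).mul hτ.inv)
      have hkH : k ∈ HH G z (ℓ a b) := by
        refine ⟨hk, ?_⟩
        change k • _ = _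
        rw [hτ a b hab, Equiv.swap_apply_of_ne_of_ne hea.symm (Ne.symm hfa),
          Equiv.swap_apply_of_ne_of_ne heb.symm (Ne.symm hfb)]
      have h3 : g⁻¹ * (k * g * k⁻¹) ∈ TT G p z (ℓ a b) :=
        Subgroup.mul_mem _ (Subgroup.inv_mem _ hg) (TT_nrm _ _ k hkH g hg)
      have h4 := h.T_semireg hl hab h3 hA hca hcb (by
        simp only [Equiv.Perm.mul_apply, Equiv.swap_inv]
        rw [Equiv.swap_apply_of_ne_of_ne (Ne.symm hec) (Ne.symm hfc), hd,
          Equiv.swap_apply_of_ne_of_ne hed.symm (Ne.symm hfd), Equiv.Perm.inv_eq_iff_eq, hd])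
      have h5 := hl.unique (by omega) hA ((mem_NN_iff_act hl).1 h4).2
      have h6 := congrArg (fun s : Equiv.Perm (Fin n) => s d) h5
      simp only [Equiv.Perm.mul_apply, Equiv.swap_inv, Equiv.Perm.one_apply] at h6
      rw [Equiv.swap_apply_of_ne_of_ne hed.symm (Ne.symm hfd), he, Equiv.swap_apply_left,
        Equiv.Perm.inv_eq_iff_eq, he] at h6
      exact hfe h6
    have hdd : σ d = c := by rw [← hd]; exact inv2 c hca hcb
    obtain ⟨e, he⟩ := exists_notMem ({a, b, c, d} : Finset (Fin n))
      (lt_of_le_of_lt Finset.card_le_four (by omega))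
    simp only [Finset.mem_insert, Finset.mem_singleton, not_or] at he
    obtain ⟨hea, heb, hec, hed⟩ := he
    obtain ⟨f, hf⟩ : ∃ f, σ e = f := ⟨_, rfl⟩
    have hfe : f ≠ e := hf ▸ fp e hea heb
    have hfa : f ≠ a := hf ▸ na e hea
    have hfb : f ≠ b := hf ▸ nb e heb
    have hfd : f ≠ d := fun q => hec (σ.injective (hf.trans (q.trans hd.symm)))
    have hfc : f ≠ c := fun q => hed (σ.injective (hf.trans (q.trans hdd.symm)))
    have hff : σ f = e := by rw [← hf]; exact inv2 e hea heb
    have all : ∀ t, t = a ∨ t = b ∨ t = c ∨ t = d ∨ t = e ∨ t = f := by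
      intro t
      by_contra! hcon
      have h3 : ({t, a, b, c, d, e, f} : Finset (Fin n)).card = 7 := by
        simp [*, Ne.symm]
      have h4 := Finset.card_le_univ ({t, a, b, c, d, e, f} : Finset (Fin n))
      rw [Fintype.card_fin] at h4
      omega
    obtain ⟨τ, t1, t2, t3, t4⟩ := perm4 hdc.symm (Ne.symm hec) hfc.symm (Ne.symm hed) hfd.symm
      hfe.symm (Ne.symm hed) hfd.symm hda hfe.symm hea hfa
    obtain ⟨k, hk, hτ⟩ := hl.real τ
    have hA := hσ.mul ((hτ.mul hσ).mul hτ.inv)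
    have u1 : τ⁻¹ d = c := by rw [Equiv.Perm.inv_eq_iff_eq, t1]
    have u2 : τ⁻¹ e = d := by rw [Equiv.Perm.inv_eq_iff_eq, t2]
    have u3 : τ⁻¹ f = e := by rw [Equiv.Perm.inv_eq_iff_eq, t3]
    have u4 : τ⁻¹ a = f := by rw [Equiv.Perm.inv_eq_iff_eq, t4]
    have u5 : τ (σ (τ⁻¹ c)) = c := by
      obtain ⟨r, hr⟩ : ∃ r, c = τ r := ⟨τ⁻¹ c, by simp⟩
      have e1 : τ⁻¹ c = r := by rw [hr]; simp
      rw [e1]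
      rcases all r with q | q | q | q | q | q
      · rw [q, sa, ← q, ← hr]
      · rw [q, sb, ← q, ← hr]
      · exact absurd (hr.trans (q ▸ t1)) hdc.symm
      · exact absurd (hr.trans (q ▸ t2)) (Ne.symm hec)
      · exact absurd (hr.trans (q ▸ t3)) hfc.symm
      · exact absurd (hr.trans (q ▸ t4)) hca
    refine h.five hl (γ := g * (k * g * k⁻¹)) ?_ hA (p1 := a) (p2 := e) (p3 := c) (p4 := d) (p5 := f)
      (Ne.symm hea) hca.symm hda.symm hfa.symm hed hfe.symm hec hfd.symm
      ?_ ?_ ?_ ?_ ?_ (.inl (by simpa [h2] using hdvd hk))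
    · change _ ∈ St G z
      have hgz : g ∈ St G z := (TT_le _ _ hg).1
      exact Subgroup.mul_mem _ hgz (Subgroup.mul_mem _ (Subgroup.mul_mem _ hk hgz)
        (Subgroup.inv_mem _ hk))
    · simp only [Equiv.Perm.mul_apply]; rw [u4, hff, t3, hff]
    · simp only [Equiv.Perm.mul_apply]; rw [u2, hdd, t1, hdd]
    · simp only [Equiv.Perm.mul_apply]; rw [u5, hd]
    · simp only [Equiv.Perm.mul_apply]; rw [u1, hd, t2, hf]
    · simp only [Equiv.Perm.mul_apply]; rw [u3, hf, t4, sa]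

end ACtx

end AbelianFour

section AbelianFive

set_option linter.unusedSectionVars false

variable {G V : Type*} [Group G] [Finite G] [MulAction G V] {Γ : SimpleGraph V} {n p : ℕ}

theorem num_two {i m : ℕ} (hp : (n = 4 ∧ p = 2) ∨ (n = 5 ∧ p = 3) ∨ (n = 6 ∧ p = 2))
    (hm : m ≤ n - 2) (hk : ∃ k, m = p ^ k) (hm1 : m ≠ 1) (hi : i ∣ m) (hi1 : i ≠ 1)
    (hi2 : 5 ≤ n → i ≠ p) : m = n - 2 ∧ p = 2 := by
  obtain ⟨k, rfl⟩ := hk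
  rcases hp with ⟨rfl, rfl⟩ | ⟨rfl, rfl⟩ | ⟨rfl, rfl⟩
  · rcases k with _ | _ | k
    · simp at hm1
    · simp
    · have : 1 ≤ 2 ^ k := Nat.one_le_two_pow
      rw [pow_succ, pow_succ] at hm; omega
  · rcases k with _ | _ | k
    · simp at hm1
    · rw [zero_add, pow_one, Nat.dvd_prime (by norm_num)] at hi
      have := hi2 le_rfl
      omega
    · have : 1 ≤ 3 ^ k := Nat.one_le_pow _ _ (by norm_num)
      rw [pow_succ, pow_succ] at hm; omega
  · rcases k with _ | _ | _ | k
    · simp at hm1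
    · rw [zero_add, pow_one, Nat.dvd_prime (by norm_num)] at hi
      have := hi2 (by norm_num)
      omega
    · simp
    · have : 1 ≤ 2 ^ k := Nat.one_le_two_pow
      rw [pow_succ, pow_succ, pow_succ] at hm; omega

/-- A critical configuration. -/
structure Conf (G : Type*) {V : Type*} [Group G] [MulAction G V] (Γ : SimpleGraph V) (p b : ℕ)
    (x y w v : V) : Prop where
  hxy : Γ.Adj x y
  hwv : Γ.Adj w v
  dyw : Γ.dist y w < b
  dxv : Γ.dist x v < b
  dxw : Γ.dist x w ≤ b
  nc : ¬ Cen (VV G Γ p x) (VV G Γ p w)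

theorem Conf.symm {b : ℕ} {x y w v : V} (c : Conf G Γ p b x y w v) : Conf G Γ p b w v x y where
  hxy := c.hwv
  hwv := c.hxy
  dyw := by rw [SimpleGraph.dist_comm]; exact c.dxv
  dxv := by rw [SimpleGraph.dist_comm]; exact c.dyw
  dxw := by rw [SimpleGraph.dist_comm]; exact c.dxw
  nc := fun h => c.nc h.symm

namespace BCtx

variable {b : ℕ} (h : BCtx G Γ n p b)
include h

theorem exists_conf : ∃ x y w v, Conf G Γ p b x y w v := by
  obtain ⟨x, w, hd, hV⟩ := h.bex
  have hb := h.bpos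
  obtain ⟨v, hv1, hv2⟩ := dist_pred h.conn (u := x) (v := w) (k := b - 1) (by omega)
  obtain ⟨y, hy1, hy2⟩ := dist_pred h.conn (u := w) (v := x) (k := b - 1)
    (by rw [SimpleGraph.dist_comm]; omega)
  refine ⟨x, y, w, v, hy1, hv1, ?_, by omega, by omega, ?_⟩
  · rw [SimpleGraph.dist_comm]; omega
  · rw [h.cen_le (by omega)]; exact hV

theorem conf_dist {x y w v : V} (c : Conf G Γ p b x y w v) :
    Γ.dist x w = b ∧ Γ.dist x v = b - 1 := by
  have h1 : ¬ Γ.dist x w < b := fun hlt => c.nc (h.cen_lt hlt)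
  have h2 := c.dxw
  have h3 := c.dxv
  have h4 := dist_adj_le h.conn (u := x) c.hwv.symm
  omega

theorem conf_index {x y w v : V} (c : Conf G Γ p b x y w v) :
    (NN G Γ w).relIndex (VV G Γ p x) = n - 2 ∧ p = 2 := by
  have hT : VV G Γ p x ≤ TT G p w v := h.VV_le_TT c.hwv c.dxv
  obtain ⟨ℓ, hl⟩ := h.lab w
  obtain ⟨a, b', hab, rfl⟩ := hl.surj v c.hwv
  obtain ⟨i1, i2, -⟩ := h.T_index hl hab hT
  have hw : ¬ VV G Γ p w ≤ NN G Γ x := by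
    rw [← h.cen_le c.symm.dxw]; exact c.symm.nc
  obtain ⟨g, hg, hgx⟩ := Set.not_subset.1 hw
  have hgT : g ∈ TT G p x y := h.VV_le_TT c.hxy c.symm.dxv hg
  obtain ⟨j1, j2⟩ := h.IDX c.hxy hgT hgx
  refine num_two h.np i1 i2 ?_ ?_ j1 j2
  · rw [Ne, Subgroup.relIndex_eq_one, ← h.cen_le c.dxw]; exact c.nc
  · rw [← Subgroup.inf_relIndex_right (NN G Γ w), ← Subgroup.inf_relIndex_right (Subgroup.centralizer {g})]
    apply Subgroup.relIndex_dvd_of_le_left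
    rintro s ⟨hs1, hs2⟩
    refine ⟨Subgroup.mem_centralizer_singleton_iff.2 ?_, hs2⟩
    exact h.OO_cen_VV w s (TT_inf_le c.hwv ⟨hT hs2, hs1⟩) g hg

theorem conf_trans {x y w v : V} (c : Conf G Γ p b x y w v) {ℓ : Fin n → Fin n → V}
    (hl : IsLab G Γ w ℓ) {a a' : Fin n} (ha : a ≠ a') (hv : ℓ a a' = v) :
    ∀ d d', d ≠ a → d ≠ a' → d' ≠ a → d' ≠ a' →
      ∃ g ∈ VV G Γ p x, ∃ σ, Act ℓ g σ ∧ σ a = a ∧ σ a' = a' ∧ σ d = d' := by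
  subst hv
  exact (h.T_index hl ha (h.VV_le_TT c.hwv c.dxv)).2.2 (h.conf_index c).1

theorem conf_full {x y w v : V} (c : Conf G Γ p b x y w v) {t : G} (ht : t ∈ TT G p w v) :
    ∃ s ∈ VV G Γ p x, ∃ o ∈ OO G Γ p w, t = s * o := by
  have hT : VV G Γ p x ≤ TT G p w v := h.VV_le_TT c.hwv c.dxv
  obtain ⟨ℓ, hl⟩ := h.lab w
  obtain ⟨a, b', hab, hv⟩ := hl.surj v c.hwv
  obtain ⟨d, hd1, hd2, -⟩ := LocPair.exists_avoid h.hn a b' a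
  have h1 : TT G p w v ≤ VV G Γ p x ⊔ OO G Γ p w := by
    have htr := h.conf_trans c hl hab hv
    subst hv
    apply h.T_cover hl hab hT hd1 hd2
    intro d' hd1' hd2' _
    obtain ⟨g, hg, σ, hσ, -, -, e⟩ := htr d d' hd1 hd2 hd1' hd2'
    exact ⟨g, hg, σ, hσ, e⟩
  have h2 : VV G Γ p x ≤ Subgroup.normalizer (OO G Γ p w : Set G) := by
    rw [← Nrm_iff_le]
    exact (h.OO_nrm w).mono (hT.trans ((TT_le _ _).trans inf_le_left))
  have h3 := h1 ht
  rw [← SetLike.mem_coe, Subgroup.coe_mul_of_left_le_normalizer_right _ _ h2] at h3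
  obtain ⟨z, hz, o, ho, e⟩ := Set.mem_mul.1 h3
  exact ⟨z, hz, o, ho, e.symm⟩

/-- The commutator determined by a critical configuration. -/
theorem conf_comm {x y w v : V} (c : Conf G Γ p b x y w v) :
    ⁅VV G Γ p w, TT G p w v⁆ = ⁅VV G Γ p w, VV G Γ p x⁆ := by
  apply le_antisymm
  · rw [Subgroup.commutator_le]
    intro g hg t ht
    obtain ⟨s, hs, o, ho, rfl⟩ := h.conf_full c ht
    have h1 := Subgroup.commutator_mem_commutator hg hs
    rw [commutatorElement_def] at *
    have h2 : o * g⁻¹ = g⁻¹ * o := h.OO_cen_VV w o ho _ (Subgroup.inv_mem _ hg)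
    have e : g * (s * o) * g⁻¹ * (s * o)⁻¹ = g * s * g⁻¹ * s⁻¹ := by
      calc g * (s * o) * g⁻¹ * (s * o)⁻¹ = g * s * (o * g⁻¹) * o⁻¹ * s⁻¹ := by group
        _ = _ := by rw [h2]; group
    rw [e]; exact h1
  · exact Subgroup.commutator_mono le_rfl (h.VV_le_TT c.hwv c.dxv)

theorem VV_le_OO_of_cen {z v : V} (hd : Γ.dist z v ≤ b) (hc : Cen (VV G Γ p z) (VV G Γ p v)) :
    VV G Γ p z ≤ OO G Γ p v := by
  by_cases hne : z = v
  · subst hne; exact h.VV_le_OO z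
  · obtain ⟨v1, ha, h1⟩ := h.exists_near hd hne
    exact h.le_OO_of_TT ha (h.VV_le_TT ha h1) ((h.cen_le hd).1 hc)

/-- (L2) -/
theorem conf_noncrit {x y w v : V} (c : Conf G Γ p b x y w v) {z : V} (hz : Γ.Adj x z)
    (hc : Cen (VV G Γ p z) (VV G Γ p v)) {g : G} (hg : g ∈ VV G Γ p w) :
    VV G Γ p (g • z) ⊔ VV G Γ p x = VV G Γ p z ⊔ VV G Γ p x := by
  have hgx : g • x = x := (TT_le _ _ (h.VV_le_TT c.hxy c.symm.dxv hg)).1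
  have hd : Γ.dist z v ≤ b := by
    have h1 := dist_adj_le h.conn (u := v) hz
    have h2 := c.dxv
    rw [SimpleGraph.dist_comm] at h2 ⊢
    omega
  have h1 : VV G Γ p z ≤ TT G p w v := (h.VV_le_OO_of_cen hd hc).trans (h.OO_le_TT' c.hwv)
  have hwx : Nrm (VV G Γ p w) (VV G Γ p x) := h.VV_nrm_VV c.symm.dxw
  have hN : ∀ g ∈ VV G Γ p w, cj g (VV G Γ p z ⊔ VV G Γ p x) ≤ VV G Γ p z ⊔ VV G Γ p x := by
    intro g hg
    rw [cj_sup, hwx.cj_eq hg]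
    apply sup_le _ le_sup_right
    intro k hk
    rw [mem_cj] at hk
    obtain ⟨s, hs, o, ho, e⟩ := h.conf_full c (h1 hk)
    have h2 : o * g⁻¹ = g⁻¹ * o := h.OO_cen_VV w o ho _ (Subgroup.inv_mem _ hg)
    have e2 : k = (g * s * g⁻¹) * s⁻¹ * (g⁻¹ * k * g) := by
      calc k = g * (g⁻¹ * k * g) * g⁻¹ := by group
        _ = g * s * (o * g⁻¹) := by rw [e]; group
        _ = (g * s * g⁻¹) * s⁻¹ * (s * o) := by rw [h2]; group
        _ = _ := by rw [e]
    rw [e2]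
    exact Subgroup.mul_mem _ (Subgroup.mul_mem _ (Subgroup.mem_sup_right (hwx g hg s hs))
      (Subgroup.mem_sup_right (Subgroup.inv_mem _ hs))) (Subgroup.mem_sup_left hk)
  have hN' : Nrm (VV G Γ p w) (VV G Γ p z ⊔ VV G Γ p x) := fun g hg k hk =>
    hN g hg (conj_mem_cj hk)
  have := hN'.cj_eq hg
  rwa [cj_sup, h.cj_VV, h.cj_VV, hgx] at this

theorem sup_not_total (hb : 2 ≤ b) (x : V)
    (ht : ∀ z z', Γ.Adj x z → Γ.Adj x z' → VV G Γ p z ⊔ VV G Γ p x = VV G Γ p z' ⊔ VV G Γ p x) :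
    False := by
  have hn := h.hn
  obtain ⟨y, hxy⟩ := h.exists_adj (by omega) x
  have h1 : Nrm (St G x) (VV G Γ p y ⊔ VV G Γ p x) := by
    rw [Nrm_iff_cj]
    intro g hg
    have hgx : g • x = x := hg
    rw [cj_sup, h.cj_VV, h.cj_VV, hgx]
    apply ht _ _ _ hxy
    have := h.adj g _ _ hxy
    rwa [hgx] at this
  obtain ⟨t, t1, t2⟩ := h.arc_trans hxy hxy.symm
  have h2 := h1.cj t
  rw [cj_St, cj_sup, h.cj_VV, h.cj_VV, t1, t2, sup_comm] at h2
  apply h.VV_ne_bot x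
  rw [eq_bot_iff, ← h.CP hxy _ h1 h2]
  · exact le_sup_right
  · exact sup_le ((h.VV_le_NN y).trans (NN_le_HH' hxy)) ((h.VV_le_NN x).trans (NN_le_HH hxy))

end BCtx

/-- A function on `Γ(x)` whose kernel is invariant under `G_x`. -/
def InvF (G : Type*) {V A : Type*} [Group G] [MulAction G V] (Γ : SimpleGraph V) (x : V)
    (F : V → A) : Prop :=
  ∀ k : G, k • x = x → ∀ z z', Γ.Adj x z → Γ.Adj x z' → F z = F z' → F (k • z) = F (k • z')

theorem InvF.row {A : Type*} {x : V} {F : V → A} (hF : InvF G Γ x F) {ℓ : Fin n → Fin n → V}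
    (hl : IsLab G Γ x ℓ) {a c c' : Fin n} (h1 : a ≠ c) (h2 : a ≠ c') (h3 : c ≠ c')
    (he : F (ℓ a c) = F (ℓ a c')) :
    ∀ q r r', q ≠ r → q ≠ r' → F (ℓ q r) = F (ℓ q r') := by
  intro q r r' k1 k2
  by_cases k3 : r = r'
  · rw [k3]
  obtain ⟨σ, s1, s2, s3⟩ := perm3 h1 h2 h3 k1 k2 k3
  obtain ⟨k, hk, hσ⟩ := hl.real σ
  have := hF k hk _ _ (hl.adj _ _ h1) (hl.adj _ _ h2) he
  rwa [hσ _ _ h1, hσ _ _ h2, s1, s2, s3] at this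

theorem InvF.total {A : Type*} {x : V} {F : V → A} (hF : InvF G Γ x F) {ℓ : Fin n → Fin n → V}
    (hl : IsLab G Γ x ℓ) (hr : ∀ q r r', q ≠ r → q ≠ r' → F (ℓ q r) = F (ℓ q r'))
    {c d e f : Fin n} (h1 : c ≠ d) (h2 : e ≠ f) (h3 : c ≠ e) (he : F (ℓ c d) = F (ℓ e f)) :
    ∀ z z', Γ.Adj x z → Γ.Adj x z' → F z = F z' := by
  intro z z' hz hz'
  obtain ⟨q, r, hqr, rfl⟩ := hl.surj z hz
  obtain ⟨q', r', hqr', rfl⟩ := hl.surj z' hz'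
  by_cases k3 : q = q'
  · subst k3; exact hr _ _ _ hqr hqr'
  obtain ⟨σ, s1, s2⟩ := perm2 h3 k3
  obtain ⟨k, hk, hσ⟩ := hl.real σ
  have := hF k hk _ _ (hl.adj _ _ h1) (hl.adj _ _ h2) he
  rw [hσ _ _ h1, hσ _ _ h2, s1, s2] at this
  have u1 : q ≠ σ d := fun e => h1 (σ.injective (s1.trans e))
  have u2 : q' ≠ σ f := fun e => h2 (σ.injective (s2.trans e))
  rw [hr q r _ hqr u1, this, hr q' _ r' u2 hqr']

end AbelianFive

section StepFive

set_option linter.unusedSectionVars false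

variable {G V : Type*} [Group G] [Finite G] [MulAction G V] {Γ : SimpleGraph V} {n p : ℕ}

theorem InvF.of_cj {x : V} {F : V → Subgroup G}
    (hF : ∀ k : G, k • x = x → ∀ z, Γ.Adj x z → F (k • z) = cj k (F z)) : InvF G Γ x F := by
  intro k hk z z' hz hz' he
  rw [hF k hk z hz, hF k hk z' hz', he]

/-- The commutator attached to an arc. -/
def rho (G : Type*) {V : Type*} [Group G] [Finite G] [MulAction G V] (Γ : SimpleGraph V) (p : ℕ)
    (z x : V) : Subgroup G := ⁅VV G Γ p z, TT G p z x⁆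

/-- The commutator attached to a vertex. -/
def RR (G : Type*) {V : Type*} [Group G] [Finite G] [MulAction G V] (Γ : SimpleGraph V) (p : ℕ)
    (x : V) : Subgroup G := ⨆ z, ⨆ (_ : Γ.Adj x z), rho G Γ p z x

namespace BCtx

variable {b : ℕ} (h : BCtx G Γ n p b)
include h

theorem two_le : 2 ≤ b := by
  have h1 := h.bpos
  have h2 := h.b_ne_one
  omega

theorem conf_fix {x y w v : V} (c : Conf G Γ p b x y w v) {g : G} (hg : g ∈ VV G Γ p w) :
    g • x = x := (TT_le _ _ (h.VV_le_TT c.hxy c.symm.dxv hg)).1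

theorem sup_inv (x : V) : InvF G Γ x (fun z => VV G Γ p z ⊔ VV G Γ p x) := by
  apply InvF.of_cj
  intro k hk z _
  rw [cj_sup, h.cj_VV, h.cj_VV, hk]

theorem conf_wlog {x y w v : V} (c : Conf G Γ p b x y w v) :
    ∃ ℓ : Fin n → Fin n → V, ∃ a a', IsLab G Γ x ℓ ∧ a ≠ a' ∧ ℓ a a' = y ∧
      ∀ d, d ≠ a → d ≠ a' → ¬ Cen (VV G Γ p (ℓ a d)) (VV G Γ p v) ∧
        ¬ Cen (VV G Γ p (ℓ a' d)) (VV G Γ p v) := by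
  obtain ⟨ℓ, hl⟩ := h.lab x
  obtain ⟨a, a', ha, hy⟩ := hl.surj y c.hxy
  have htr := h.conf_trans c.symm hl ha hy
  have hF := h.sup_inv x
  by_cases k1 : ∀ d, d ≠ a → d ≠ a' → ¬ Cen (VV G Γ p (ℓ a d)) (VV G Γ p v) ∧
        ¬ Cen (VV G Γ p (ℓ a' d)) (VV G Γ p v)
  · exact ⟨ℓ, a, a', hl, ha, hy, k1⟩
  by_cases k2 : ∀ d, d ≠ a → d ≠ a' → ¬ Cen (VV G Γ p (ℓ d a)) (VV G Γ p v) ∧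
        ¬ Cen (VV G Γ p (ℓ d a')) (VV G Γ p v)
  · exact ⟨fun i j => ℓ j i, a', a, hl.swap, ha.symm, hy, fun d h1 h2 => (k2 d h2 h1).symm⟩
  exfalso
  have hrow : ∀ q r r', q ≠ r → q ≠ r' → VV G Γ p (ℓ q r) ⊔ VV G Γ p x =
      VV G Γ p (ℓ q r') ⊔ VV G Γ p x := by
    push Not at k1
    obtain ⟨d, d1, d2, d3⟩ := k1
    obtain ⟨d', e1, e2, e3⟩ := LocPair.exists_avoid h.hn a a' d
    obtain ⟨g, hg, σ, hσ, s1, s2, s3⟩ := htr d d' d1 d2 e1 e2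
    by_cases hc : Cen (VV G Γ p (ℓ a d)) (VV G Γ p v)
    · have := h.conf_noncrit c (hl.adj _ _ d1.symm) hc hg
      rw [hσ _ _ d1.symm, s1, s3] at this
      exact hF.row hl e1.symm d1.symm e3 this
    · have := h.conf_noncrit c (hl.adj _ _ d2.symm) (d3 hc) hg
      rw [hσ _ _ d2.symm, s2, s3] at this
      exact hF.row hl e2.symm d2.symm e3 this
  apply h.sup_not_total h.two_le x
  push Not at k2
  obtain ⟨d, d1, d2, d3⟩ := k2
  obtain ⟨d', e1, e2, e3⟩ := LocPair.exists_avoid h.hn a a' d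
  obtain ⟨g, hg, σ, hσ, s1, s2, s3⟩ := htr d d' d1 d2 e1 e2
  by_cases hc : Cen (VV G Γ p (ℓ d a)) (VV G Γ p v)
  · have := h.conf_noncrit c (hl.adj _ _ d1) hc hg
    rw [hσ _ _ d1, s1, s3] at this
    exact hF.total hl hrow e1 d1 e3 this
  · have := h.conf_noncrit c (hl.adj _ _ d2) (d3 hc) hg
    rw [hσ _ _ d2, s2, s3] at this
    exact hF.total hl hrow e2 d2 e3 this

theorem crit_smul {x y w v : V} (c : Conf G Γ p b x y w v) {z : V} {g : G}
    (hg : g ∈ VV G Γ p w) (hc : ¬ Cen (VV G Γ p z) (VV G Γ p v)) :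
    ¬ Cen (VV G Γ p (g • z)) (VV G Γ p v) := by
  intro hcc
  apply hc
  have hb := h.two_le
  have hgv : g • v = v := by
    have h1 : VV G Γ p w ≤ HH G w v := (h.VV_le_NN w).trans (NN_le_HH c.hwv)
    exact (h1 hg).2
  have h1 := hcc.cj g⁻¹
  rw [h.cj_VV, h.cj_VV, inv_smul_smul] at h1
  rwa [inv_smul_eq_iff.2 hgv.symm] at h1

theorem abs_total {x y w v : V} (c : Conf G Γ p b x y w v) {A : Type*} {F : V → A}
    (hF : InvF G Γ x F)
    (hc : ∀ z, Γ.Adj x z → ¬ Cen (VV G Γ p z) (VV G Γ p v) → ∀ g ∈ VV G Γ p w, F z = F (g • z)) :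
    ∀ z z', Γ.Adj x z → Γ.Adj x z' → F z = F z' := by
  obtain ⟨ℓ, a, a', hl, ha, hy, hcr⟩ := h.conf_wlog c
  have htr := h.conf_trans c.symm hl ha hy
  obtain ⟨d, d1, d2, -⟩ := LocPair.exists_avoid h.hn a a' a
  obtain ⟨d', e1, e2, e3⟩ := LocPair.exists_avoid h.hn a a' d
  obtain ⟨g, hg, σ, hσ, s1, s2, s3⟩ := htr d d' d1 d2 e1 e2
  have hrow : ∀ q r r', q ≠ r → q ≠ r' → F (ℓ q r) = F (ℓ q r') := by
    have := hc _ (hl.adj _ _ d1.symm) (hcr d d1 d2).1 g hg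
    rw [hσ _ _ d1.symm, s1, s3] at this
    exact hF.row hl d1.symm e1.symm e3.symm this
  by_cases k1 : Cen (VV G Γ p (ℓ d a)) (VV G Γ p v)
  · have h1 := h.conf_noncrit c (hl.adj _ _ d1) k1 hg
    rw [hσ _ _ d1, s1, s3] at h1
    have h2 : VV G Γ p (ℓ a d') ⊔ VV G Γ p x = VV G Γ p (ℓ d d') ⊔ VV G Γ p x :=
      (h.sup_inv x).row hl.swap e1.symm d1.symm e3 h1 d' a d e1 e3
    have k2 : ¬ Cen (VV G Γ p (ℓ d d')) (VV G Γ p v) := by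
      intro hcen
      apply (hcr d' e1 e2).1
      have h3 : Cen (VV G Γ p (ℓ d d') ⊔ VV G Γ p x) (VV G Γ p v) :=
        (Cen.sup hcen.symm (h.cen_lt c.dxv).symm).symm
      rw [← h2] at h3
      exact h3.mono le_sup_left le_rfl
    have h4 := hc _ (hl.adj _ _ e3.symm) k2 g hg
    rw [hσ _ _ e3.symm, s3] at h4
    refine hF.total hl hrow e3.symm ?_ e3.symm h4
    intro he
    exact e3 (σ.injective (by rw [s3, ← he]))
  · have := hc _ (hl.adj _ _ d1) k1 g hg
    rw [hσ _ _ d1, s1, s3] at this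
    exact hF.total hl hrow d1 e1 e3.symm this

theorem cj_rho (g : G) (z x : V) : cj g (rho G Γ p z x) = rho G Γ p (g • z) (g • x) := by
  rw [rho, cj_comm, h.cj_VV, cj_TT]; rfl

/-- A critical neighbour gives a configuration. -/
theorem crit_conf {x y w v : V} (c : Conf G Γ p b x y w v) {z : V} (hz : Γ.Adj x z)
    (hc : ¬ Cen (VV G Γ p z) (VV G Γ p v)) : ∃ v', Conf G Γ p b v v' z x := by
  have hd : Γ.dist z v ≤ b := by
    have h1 := dist_adj_le h.conn (u := v) hz
    have h2 := c.dxv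
    rw [SimpleGraph.dist_comm] at h2 ⊢
    omega
  obtain ⟨v', h1, h2⟩ := h.exists_near hd (h.ne_of_not_cen hc)
  refine ⟨v', h1, hz.symm, ?_, ?_, ?_, fun hh => hc hh.symm⟩
  · rwa [SimpleGraph.dist_comm]
  · rw [SimpleGraph.dist_comm]; exact c.dxv
  · rwa [SimpleGraph.dist_comm]

theorem rho_const_conf {x y w v : V} (c : Conf G Γ p b x y w v) :
    ∀ z z', Γ.Adj x z → Γ.Adj x z' → rho G Γ p z x = rho G Γ p z' x := by
  apply h.abs_total c (F := fun z => rho G Γ p z x)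
  · apply InvF.of_cj
    intro k hk z _
    rw [h.cj_rho, hk]
  · intro z hz hcr g hg
    have hgx := h.conf_fix c hg
    have hb := h.two_le
    obtain ⟨v', c'⟩ := h.crit_conf c hz hcr
    have h1 : rho G Γ p z x ≤ VV G Γ p v := by
      rw [rho, h.conf_comm c']
      exact (h.VV_nrm_VV c'.symm.dxw).comm_le
    have h2 : Cen (VV G Γ p w) (VV G Γ p v) := by
      apply h.cen_lt
      rw [SimpleGraph.dist_eq_one_iff_adj.2 c.hwv]
      omega
    have h3 := ((h2.mono le_rfl h1).nrm).cj_eq hg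
    rw [h.cj_rho, hgx] at h3
    exact h3.symm

theorem rho_const (x : V) :
    ∀ z z', Γ.Adj x z → Γ.Adj x z' → rho G Γ p z x = rho G Γ p z' x := by
  obtain ⟨x0, y, w, v, c⟩ := h.exists_conf
  obtain ⟨g, rfl⟩ := h.trans x0 x
  intro z z' hz hz'
  have h1 := h.rho_const_conf c (g⁻¹ • z) (g⁻¹ • z')
    (by have := h.adj g⁻¹ _ _ hz; rwa [inv_smul_smul] at this)
    (by have := h.adj g⁻¹ _ _ hz'; rwa [inv_smul_smul] at this)
  have h2 := congrArg (cj g) h1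
  rwa [h.cj_rho, h.cj_rho, smul_inv_smul, smul_inv_smul] at h2

theorem RR_eq {x z : V} (hz : Γ.Adj x z) : RR G Γ p x = rho G Γ p z x := by
  apply le_antisymm
  · exact iSup_le fun z' => iSup_le fun hz' => (h.rho_const x z' z hz' hz).le
  · exact le_iSup_of_le z (le_iSup_of_le hz le_rfl)

theorem cj_RR (g : G) (x : V) : cj g (RR G Γ p x) = RR G Γ p (g • x) := by
  have hn := h.hn
  obtain ⟨y, hxy⟩ := h.exists_adj (by omega) x
  rw [h.RR_eq hxy, h.RR_eq (h.adj g _ _ hxy), h.cj_rho]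

theorem RR_nrm (x : V) : Nrm (St G x) (RR G Γ p x) := by
  rw [Nrm_iff_cj]
  intro g hg
  have hgx : g • x = x := hg
  rw [h.cj_RR, hgx]

theorem conf_RR {x y w v : V} (c : Conf G Γ p b x y w v) :
    RR G Γ p v = ⁅VV G Γ p x, VV G Γ p w⁆ := by
  rw [h.RR_eq c.hwv.symm, rho, h.conf_comm c, Subgroup.commutator_comm]

theorem conf_RR' {x y w v : V} (c : Conf G Γ p b x y w v) : RR G Γ p y = RR G Γ p v := by
  rw [h.conf_RR c, h.conf_RR c.symm, Subgroup.commutator_comm]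

theorem RR_ne_bot (x : V) : RR G Γ p x ≠ ⊥ := by
  obtain ⟨x0, y, w, v, c⟩ := h.exists_conf
  obtain ⟨g, rfl⟩ := h.trans v x
  rw [← h.cj_RR, Ne, cj_eq_bot, h.conf_RR c, ← Cen_iff]
  exact c.nc

theorem RR_le_VV {x z : V} (hz : Γ.Adj x z) : RR G Γ p x ≤ VV G Γ p z := by
  rw [h.RR_eq hz, rho]
  exact ((h.VV_nrm z).mono ((TT_le _ _).trans inf_le_left)).comm_le'

theorem RR_le_HH {x z : V} (hz : Γ.Adj x z) : RR G Γ p x ≤ HH G x z :=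
  (h.RR_le_VV hz).trans ((h.VV_le_NN z).trans (NN_le_HH' hz))

theorem b_lt_three : b < 3 := by
  by_contra hb
  push Not at hb
  obtain ⟨x, y, w, v, c⟩ := h.exists_conf
  have hd := (h.conf_dist c).2
  obtain ⟨v2, a2, e2⟩ := dist_pred h.conn (u := x) (v := v) (k := b - 2) (by omega)
  obtain ⟨v3, a3, e3⟩ := dist_pred h.conn (u := x) (v := v2) (k := b - 3) (by omega)
  have key : ∀ z, Γ.Adj x z → ¬ Cen (VV G Γ p z) (VV G Γ p v) → RR G Γ p z = RR G Γ p v3 := by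
    intro z hz hcr
    have dz : ∀ q, Γ.dist z q ≤ Γ.dist x q + 1 := by
      intro q
      have := dist_adj_le h.conn (u := q) hz
      rwa [SimpleGraph.dist_comm, SimpleGraph.dist_comm (u := q) (v := x)] at this
    have d1 := dz v
    have d2 := dz v2
    have d3 := dz v3
    have c1 : Conf G Γ p b z x v v2 := ⟨hz.symm, a2, c.dxv, by omega, by omega, hcr⟩
    obtain ⟨ℓ, a, a', hl, ha, hy, hcc⟩ := h.conf_wlog c1
    obtain ⟨d, q1, q2, -⟩ := LocPair.exists_avoid h.hn a a' a
    have hz' := hl.adj _ _ q1.symm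
    have dz' : ∀ q, Γ.dist (ℓ a d) q ≤ Γ.dist z q + 1 := by
      intro q
      have := dist_adj_le h.conn (u := q) hz'
      rwa [SimpleGraph.dist_comm, SimpleGraph.dist_comm (u := q) (v := z)] at this
    have d4 := dz' v2
    have d5 := dz' v3
    have c2 : Conf G Γ p b (ℓ a d) z v2 v3 :=
      ⟨hz'.symm, a3, by omega, by omega, by omega, (hcc d q1 q2).1⟩
    exact h.conf_RR' c2
  have hconst := h.abs_total c (F := fun z => RR G Γ p z)
    (InvF.of_cj fun k _ z _ => (h.cj_RR k z).symm) (by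
      intro z hz hcr g hg
      have hgx := h.conf_fix c hg
      have h1 : Γ.Adj x (g • z) := by
        have := h.adj g _ _ hz
        rwa [hgx] at this
      change RR G Γ p z = RR G Γ p (g • z)
      rw [key z hz hcr, key _ h1 (h.crit_smul c hg hcr)])
  apply h.RR_ne_bot y
  have hxy := c.hxy
  apply h.CP hxy
  · rw [HH_comm]; exact h.RR_le_HH hxy.symm
  · rw [Nrm_iff_cj]
    intro g hg
    have hgx : g • x = x := hg
    rw [h.cj_RR]
    apply hconst _ _ _ hxy
    have := h.adj g _ _ hxy
    rwa [hgx] at this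
  · exact h.RR_nrm y

theorem TT_cen_RR {z z' x : V} (c : Conf G Γ p b z' x z x) {u q : V} (hu : Γ.Adj u q) :
    Cen (TT G p u q) (RR G Γ p q) := by
  obtain ⟨k, k1, k2⟩ := h.arc_trans c.hwv hu
  rw [← k1, ← k2, ← cj_TT, ← h.cj_RR]
  apply Cen.cj
  intro t ht r hr
  obtain ⟨s, hs, o, ho, rfl⟩ := h.conf_full c ht
  have e1 := h.VV_cen z' s hs r (h.RR_le_VV c.hxy.symm hr)
  have e2 := h.OO_cen_VV z o ho r (h.RR_le_VV c.hwv.symm hr)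
  rw [mul_assoc, e2, ← mul_assoc, e1, mul_assoc]

theorem RR_inf {z z' x : V} (c : Conf G Γ p b z' x z x) {u q : V} (hu : Γ.Adj u q) :
    RR G Γ p u ⊓ RR G Γ p q = ⊥ := by
  apply h.CPG h.hn hu
  · exact inf_le_left.trans (h.RR_le_HH hu)
  · exact Nrm.inf ((h.RR_nrm u).mono inf_le_left) ((h.RR_nrm q).mono inf_le_right)
  · intro t ht
    refine ⟨TT G p u t, TT_le _ _, TT_nrm _ _, h.TT_not_le ht, ?_⟩
    rw [TT_comm]
    exact ((h.TT_cen_RR c ht.symm).mono le_rfl inf_le_left).nrm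
  · intro t ht
    refine ⟨TT G p q t, TT_le _ _, TT_nrm _ _, h.TT_not_le ht, ?_⟩
    rw [TT_comm]
    exact ((h.TT_cen_RR c ht.symm).mono le_rfl inf_le_right).nrm

/-- Elements acting nontrivially do not commute. -/
theorem not_comm {z z' x : V} (c : Conf G Γ p b z x z' x) {k k' : G} (hk : k ∈ VV G Γ p z)
    (hkn : k ∉ NN G Γ z') (hk' : k' ∈ VV G Γ p z') (hkn' : k' ∉ NN G Γ z) : k * k' ≠ k' * k := by
  intro hcomm
  obtain ⟨hi, hp⟩ := h.conf_index c
  have hf := h.np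
  have hT : k' ∈ TT G p z x := h.VV_le_TT c.hxy c.symm.dxv hk'
  obtain ⟨i1, i2⟩ := h.IDX c.hxy hT hkn'
  have m1 := relIndex_mul_card' (Subgroup.centralizer {k'}) (VV G Γ p z)
  have m2 := relIndex_mul_card' (NN G Γ z') (VV G Γ p z)
  have hle : NN G Γ z' ⊓ VV G Γ p z ≤ Subgroup.centralizer {k'} ⊓ VV G Γ p z := by
    refine le_inf ?_ inf_le_right
    intro g hg
    rw [Subgroup.mem_centralizer_singleton_iff]
    have : NN G Γ z' ⊓ VV G Γ p z ≤ OO G Γ p z' :=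
      h.le_OO_of_TT c.hwv (inf_le_right.trans (h.VV_le_TT c.hwv c.dxv)) inf_le_left
    exact h.OO_cen_VV z' g (this hg) k' hk'
  have hne : Nat.card (NN G Γ z' ⊓ VV G Γ p z : Subgroup G) ≠
      Nat.card (Subgroup.centralizer {k'} ⊓ VV G Γ p z : Subgroup G) := by
    intro he
    have := eq_of_le_card hle he
    apply hkn
    have h1 : k ∈ Subgroup.centralizer {k'} ⊓ VV G Γ p z :=
      ⟨Subgroup.mem_centralizer_singleton_iff.2 hcomm, hk⟩
    rw [← this] at h1
    exact h1.1
  obtain ⟨r, hr⟩ := Subgroup.card_dvd_of_le hle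
  have hpos : 0 < Nat.card (NN G Γ z' ⊓ VV G Γ p z : Subgroup G) := Nat.card_pos
  rw [hi] at m2
  rw [hr, ← m2] at m1
  have m3 : (Subgroup.centralizer {k'}).relIndex (VV G Γ p z) * r = n - 2 := by
    apply Nat.eq_of_mul_eq_mul_right hpos
    rw [← m1]; ring
  have hr1 : r ≠ 1 := by
    rintro rfl
    apply hne
    rw [hr, mul_one]
  generalize (Subgroup.centralizer {k'}).relIndex (VV G Γ p z) = i at *
  subst hp
  rcases hf with ⟨rfl, -⟩ | ⟨-, h0⟩ | ⟨rfl, -⟩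
  · have : r ∣ 2 := ⟨i, by rw [mul_comm]; omega⟩
    rcases (Nat.dvd_prime Nat.prime_two).1 this with rfl | rfl <;> omega
  · omega
  · have : r ∣ 2 ^ 2 := ⟨i, by rw [mul_comm]; omega⟩
    obtain ⟨j, hj, rfl⟩ := (Nat.dvd_prime_pow Nat.prime_two).1 this
    have i3 := i2 (by norm_num)
    interval_cases j <;> omega

theorem b_ne_two : b ≠ 2 := by
  rintro rfl
  obtain ⟨x, y0, w, y, c0⟩ := h.exists_conf
  have hd := (h.conf_dist c0).2
  have hp := (h.conf_index c0).2
  have hxy : Γ.Adj x y := SimpleGraph.dist_eq_one_iff_adj.1 hd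
  have hwy := c0.hwv
  have d1 : ∀ {u v : V}, Γ.Adj u v → Γ.dist u v < 2 := by
    intro u v huv
    rw [SimpleGraph.dist_eq_one_iff_adj.2 huv]; omega
  have mk : ∀ {u q v : V}, Γ.Adj u q → Γ.Adj v q → ¬ Cen (VV G Γ p u) (VV G Γ p v) →
      Conf G Γ p 2 u q v q := by
    intro u q v h1 h2 h3
    refine ⟨h1, h2, d1 h2.symm, d1 h1, ?_, h3⟩
    have := dist_adj_le h.conn (u := u) h2.symm
    have := d1 h1
    omega
  have c : Conf G Γ p 2 x y w y := mk hxy hwy c0.nc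
  obtain ⟨ℓ, a, a', hl, ha, hy, hcr⟩ := h.conf_wlog c
  obtain ⟨d, q1, q2, -⟩ := LocPair.exists_avoid h.hn a a' a
  obtain ⟨d', e1, e2, e3⟩ := LocPair.exists_avoid h.hn a a' d
  obtain ⟨g, hg, σ, hσ, s1, s2, s3⟩ := h.conf_trans c.symm hl ha hy d d' q1 q2 e1 e2
  obtain ⟨τ, t1, t2, t3⟩ := perm3 q1.symm ha q2 q1.symm e1.symm e3.symm
  obtain ⟨k, k1, k2⟩ := hl.real τ
  have hgz : g • ℓ a d = ℓ a d' := by rw [hσ _ _ q1.symm, s1, s3]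
  have hnc : ¬ Cen (VV G Γ p (ℓ a d)) (VV G Γ p (ℓ a d')) := by
    intro hcen
    apply (hcr d q1 q2).1
    have := hcen.cj k⁻¹
    rw [h.cj_VV, h.cj_VV] at this
    have z1 : k⁻¹ • ℓ a d = ℓ a d := by rw [inv_smul_eq_iff, k2 _ _ q1.symm, t1, t2]
    have z2 : k⁻¹ • ℓ a d' = y := by rw [inv_smul_eq_iff, ← hy, k2 _ _ ha, t1, t3]
    rwa [z1, z2] at this
  have hxz := hl.adj _ _ q1.symm
  have hxz' := hl.adj _ _ e1.symm
  generalize ℓ a d = z at *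
  generalize ℓ a d' = z' at *
  have cz : Conf G Γ p 2 z x z' x := mk hxz.symm hxz'.symm hnc
  have sq : ∀ {u : V} {t : G}, t ∈ VV G Γ p u → t⁻¹ = t := by
    intro u t ht
    have := h.VV_pow u ht
    rw [hp, pow_two] at this
    exact inv_eq_of_mul_eq_one_right this
  have hne : ¬ VV G Γ p z ≤ NN G Γ z' := fun hh => hnc ((h.cen_le cz.dxw).2 hh)
  obtain ⟨t, ht, htn⟩ := SetLike.not_le_iff_exists.1 hne
  have ht' : g * t * g⁻¹ ∈ VV G Γ p z' := by
    have := conj_mem_cj (g := g) ht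
    rwa [h.cj_VV, hgz] at this
  have hgz' : g • z' = z := by
    rw [← hgz, ← sq hg, inv_smul_eq_iff, sq hg]
  have htn' : g * t * g⁻¹ ∉ NN G Γ z := by
    intro hh
    apply htn
    rw [← hgz', ← h.cj_NN, mem_cj] at hh
    simpa [mul_assoc] using hh
  have hcomm := h.not_comm cz ht htn ht' htn'
  set t' := g * t * g⁻¹ with htt
  have r1 : t * t' * t⁻¹ * t'⁻¹ ∈ RR G Γ p x := by
    rw [h.conf_RR cz]
    exact Subgroup.commutator_mem_commutator ht ht'
  have hty : t • y = y := by
    have : VV G Γ p z ≤ HH G x y := by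
      have h1 := h.VV_le_OO' (d1 hxz.symm)
      exact h1.trans ((OO_le x).trans (NN_le_HH hxy))
    exact (this ht).2
  have hne1 : t * t' * t⁻¹ * t'⁻¹ ≠ 1 := by
    intro hh
    apply hcomm
    rw [mul_inv_eq_one, mul_inv_eq_iff_eq_mul] at hh
    exact hh
  have e : t * t' * t⁻¹ * t'⁻¹ = (t * g * t⁻¹) * g * (t * g * t⁻¹)⁻¹ * g⁻¹ := by
    rw [sq ht']
    simp only [htt, mul_inv_rev, inv_inv, sq ht, sq hg]
    group
  have r2 : t * t' * t⁻¹ * t'⁻¹ ∈ ⁅VV G Γ p (t • w), VV G Γ p w⁆ := by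
    rw [e]
    refine Subgroup.commutator_mem_commutator ?_ hg
    have := conj_mem_cj (g := t) hg
    rwa [h.cj_VV] at this
  have hadj : Γ.Adj (t • w) y := by
    have := h.adj t _ _ hwy
    rwa [hty] at this
  have hnc2 : ¬ Cen (VV G Γ p (t • w)) (VV G Γ p w) := by
    intro hcen
    rw [Cen_iff.1 hcen, Subgroup.mem_bot] at r2
    exact hne1 r2
  rw [← h.conf_RR (mk hadj hwy hnc2)] at r2
  have := h.RR_inf cz.symm hxy
  apply hne1
  rw [← Subgroup.mem_bot, ← this]
  exact ⟨r1, r2⟩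

theorem false : False := by
  have h1 := h.two_le
  have h2 := h.b_lt_three
  have h3 := h.b_ne_two
  omega

end BCtx

theorem ACtx.false (h : ACtx G Γ n p) : False := by
  obtain ⟨b, hb⟩ := h.exists_BCtx
  exact hb.false

end StepFive

section Assembly

set_option linter.unusedSectionVars false

variable {G V : Type*} [Group G] [Finite G] [MulAction G V] {Γ : SimpleGraph V} {n : ℕ}

theorem LocPair.cj_PP (h : LocPair G Γ n) (g : G) (x y : V) :
    cj g (PP G Γ x y) = PP G Γ (g • x) (g • y) := by
  ext k
  simp only [mem_cj, PP, Subgroup.mem_iInf]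
  constructor
  · intro hk z hz
    have h2 := hk (g⁻¹ • z) (by
      rw [← h.adj_iff g x, ← h.adj_iff g y, smul_inv_smul]; exact hz)
    rw [← mem_cj, h.cj_NN, smul_inv_smul] at h2
    exact h2
  · intro hk z hz
    have h2 := hk (g • z) (by rwa [h.adj_iff g, h.adj_iff g])
    rwa [← h.cj_NN, mem_cj] at h2

theorem LocPair.PP_eq_bot (h : LocPair G Γ n) (hn : 4 ≤ n) {x y : V} (hxy : Γ.Adj x y) :
    PP G Γ x y = ⊥ := by
  by_contra hne
  obtain ⟨M, h1, h2, h3⟩ := exists_min_subn _ hne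
  have hN : Nrm (HH G x y) (PP G Γ x y) := by
    rw [Nrm_iff_cj]
    intro g hg
    rw [h.cj_PP, hg.1, hg.2]
  rcases simple_dichotomy M h2 h3 with hp | ⟨p, hp, hM⟩
  · refine h.nonabelian hn hxy h2 h3 hp ?_ ?_
    · exact h1.trans (Subn.of_nrm (PP_le (.inr hxy.symm)) (hN.mono (NN_le_HH hxy)))
    · exact h1.trans (Subn.of_nrm (PP_le (.inl hxy)) (hN.mono (NN_le_HH' hxy)))
  · have h4 := h1.le_Op hM
    have hA : ACtx G Γ n p := by
      refine { h with hn := hn, hp := hp, hX := ?_ }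
      intro x' y' hxy'
      obtain ⟨k, rfl, rfl⟩ := h.arc_trans hxy hxy'
      rw [← h.cj_PP, ← Op_cj, Ne, cj_eq_bot]
      intro hb
      rw [hb] at h4
      exact h2 (le_bot_iff.1 h4)
    exact hA.false

end Assembly

theorem IsLocallyOPairs.locPair {V : Type*} {n : ℕ} {Γ : SimpleGraph V} (hconn : Γ.Connected)
    {G : Subgroup (Equiv.Perm V)} (hloc : IsLocallyOPairs n Γ G) : LocPair G Γ n where
  conn := hconn
  faithful g hg := by
    ext v
    exact hg v
  adj g u v huv := (hloc.1 g.1 g.2 u v).1 huv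
  trans u v := hloc.2.1.exists_smul_eq u v
  lab x := by
    classical
    obtain ⟨e, φ, hs, he⟩ := hloc.2.2 x
    let ℓ : Fin n → Fin n → V := fun a b =>
      if hab : a ≠ b then (e.symm ⟨(a, b), hab⟩ : Γ.neighborSet x) else x
    have hℓ : ∀ a b (hab : a ≠ b), ℓ a b = (e.symm ⟨(a, b), hab⟩ : Γ.neighborSet x) := by
      intro a b hab
      simp only [ℓ, dif_pos hab]
    have hact : ∀ g : stabilizer G x, Act ℓ (g : G) (φ g) := by
      intro g a b hab
      have h1 := he g (e.symm ⟨(a, b), hab⟩)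
      rw [Equiv.apply_symm_apply] at h1
      rw [hℓ a b hab, hℓ _ _ (fun hh => hab ((φ g).injective hh))]
      exact h1.symm
    refine ⟨ℓ, ?_, ?_, ?_, ?_, ?_⟩
    · intro a b hab
      rw [hℓ a b hab]
      exact (e.symm ⟨(a, b), hab⟩).2
    · intro a b c d hab hcd h1
      rw [hℓ a b hab, hℓ c d hcd] at h1
      have h2 := e.symm.injective (Subtype.ext h1)
      have h3 := congrArg Subtype.val h2
      exact ⟨congrArg Prod.fst h3, congrArg Prod.snd h3⟩
    · intro y hy
      refine ⟨(e ⟨y, hy⟩).1.1, (e ⟨y, hy⟩).1.2, (e ⟨y, hy⟩).2, ?_⟩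
      rw [hℓ _ _ (e ⟨y, hy⟩).2]
      change ((e.symm (e ⟨y, hy⟩) : Γ.neighborSet x) : V) = y
      rw [Equiv.symm_apply_apply]
    · intro g hg
      exact ⟨φ ⟨g, hg⟩, hact ⟨g, hg⟩⟩
    · intro σ
      obtain ⟨g, rfl⟩ := hs σ
      exact ⟨g, g.2, hact g⟩

theorem mem_ballStab {V : Type*} {Γ : SimpleGraph V} {G : Subgroup (Equiv.Perm V)} {x : V} {i : ℕ}
    {g : G} (hg : g ∈ ballStab Γ G x i) {v : V} (hv : Γ.dist x v ≤ i) : g • v = v := by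
  simp only [ballStab, Subgroup.mem_iInf] at hg
  exact hg v hv

theorem ball_le_PP {V : Type*} {Γ : SimpleGraph V} (hconn : Γ.Connected)
    {G : Subgroup (Equiv.Perm V)} (x y : V) :
    ballStab Γ G x 2 ⊓ ballStab Γ G y 2 ≤ PP G Γ x y := by
  intro g hg
  have key : ∀ u, g ∈ ballStab Γ G u 2 → ∀ z, Γ.Adj u z → g ∈ NN G Γ z := by
    intro u hu z hz
    have h1 : Γ.dist u z = 1 := SimpleGraph.dist_eq_one_iff_adj.2 hz
    refine ⟨mem_ballStab hu (by omega), fun t ht => mem_ballStab hu ?_⟩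
    have := dist_adj_le hconn (u := u) ht
    omega
  simp only [PP, Subgroup.mem_iInf]
  rintro z (hz | hz)
  · exact key x hg.1 z hz
  · exact key y hg.2 z hz

/-- for `n ≥ 3` and `(Γ,G)` a locally `L` pair, where `L` is the group
induced by `Sym(n)` on ordered pairs of distinct elements of `{1,…,n}`, the group
`G_{xy}^{[2]} = G_x^{[2]} ∩ G_y^{[2]}` is trivial for every edge `{x,y}`. -/
theorem stmt_11 {V : Type*} [Fintype V] (n : ℕ) (hn : 3 ≤ n)
    (Γ : SimpleGraph V) (hconn : Γ.Connected)
    (G : Subgroup (Equiv.Perm V)) (hloc : IsLocallyOPairs n Γ G)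
    (x y : V) (hxy : Γ.Adj x y) :
    ballStab Γ G x 2 ⊓ ballStab Γ G y 2 = ⊥ := by
  classical
  have hL := hloc.locPair hconn
  rw [eq_bot_iff]
  by_cases h3 : n = 3
  · rw [← hL.case3 h3 hxy]
    intro g hg
    exact ⟨mem_ballStab hg.1 (by simp), mem_ballStab hg.2 (by simp)⟩
  · rw [← hL.PP_eq_bot (by omega) hxy]
    exact ball_le_PP hconn x y
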